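/- arXiv:2410.00870 — 9 statements merged into one kernel-verified Lean document; each statement's English description precedes it below -/
import Mathlib

section
/- Let a, b ∈ ℚ and suppose f(x) = x^12 + a·x^6 + b is irreducible over ℚ. Then every element of the Galois group Gal(f) of f over ℚ acts as an even permutation on the set of roots of f in ℂ (i.e., the image of every element under the Galois action homomorphism into the permutation group of the root set of f in ℂ has sign 1) if and only if b is a square in ℚ. -/
open Polynomial

attribute [local instance] Polynomial.Gal.splits_ℚ_ℂ

/-!
The Galois group of a separable polynomial acts by even permutations exactly when the discriminant
is a square: `√disc` is, up to a factor in the base field, the Vandermonde determinant of the roots,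
on which the Galois group acts through the sign character. Since the derivative of `g(X ^ m)` is
`m X ^ (m - 1) g'(X ^ m)`, multiplicativity of the resultant gives
`disc (g(X ^ m)) = ± m ^ (n m) (lc(g) g(0)) ^ (m - 1) disc(g) ^ m`, where `n = deg g`. For `m` even
this is `± lc(g) g(0)` up to squares, and for `g = X ^ 2 + a X + b`, `m = 6` the sign is `+`.
-/

section Resultant

variable {R : Type*} [CommRing R]

theorem resultant_mul_right_of_le (f : R[X]) {g₁ g₂ : R[X]} {m n₁ n₂ : ℕ}
    (hf : f.natDegree ≤ m) (hg₁ : g₁.natDegree ≤ n₁) (hg₂ : g₂.natDegree ≤ n₂) :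
    resultant f (g₁ * g₂) m (n₁ + n₂) = resultant f g₁ m n₁ * resultant f g₂ m n₂ := by
  obtain ⟨k₁, rfl⟩ := Nat.exists_eq_add_of_le hg₁
  obtain ⟨k₂, rfl⟩ := Nat.exists_eq_add_of_le hg₂
  rw [add_add_add_comm, resultant_add_right_deg _ _ _ _ _ natDegree_mul_le,
    resultant_add_right_deg _ _ _ _ _ le_rfl, resultant_add_right_deg _ _ _ _ _ le_rfl,
    resultant_mul_right _ _ _ _ hf, pow_add]
  ring

theorem resultant_X_pow_sub_C_expand (r : R) {g : R[X]} (k : ℕ) {n : ℕ} (hg : g.natDegree ≤ n) :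
    resultant (X ^ k - C r) (expand R k g) k (n * k) = g.eval r ^ k := by
  nontriviality R
  obtain rfl | hk := eq_or_ne k 0
  · simp
  obtain hg₀ | hg₀ := g.natDegree.eq_zero_or_pos
  · obtain ⟨c, rfl⟩ := natDegree_eq_zero.mp hg₀
    rw [expand_C, resultant_C_right]
    simp [coeff_C, hk]
  have hquot : (expand R k (g /ₘ (X - C r))).natDegree + k ≤ n * k := by
    rw [natDegree_expand, natDegree_divByMonic g (monic_X_sub_C r), natDegree_X_sub_C,
      ← Nat.succ_mul]
    exact Nat.mul_le_mul_right k (by lia)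
  have hdiv : expand R k g = C (g.eval r) + (X ^ k - C r) * expand R k (g /ₘ (X - C r)) := by
    conv_lhs => rw [← g.modByMonic_add_div (X - C r), modByMonic_X_sub_C_eq_C_eval]
    simp
  rw [hdiv, resultant_add_mul_right _ _ _ _ _ hquot natDegree_X_pow_sub_C.le, resultant_C_right]
  simp [coeff_C, hk]

theorem resultant_expand_of_splits [IsDomain R] {f : R[X]} (hf : f.Splits) {g : R[X]}
    (k : ℕ) {n : ℕ} (hg : g.natDegree ≤ n) :
    resultant (expand R k f) (expand R k g) (f.natDegree * k) (n * k) =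
      resultant f g f.natDegree n ^ k := by
  have hgk : (expand R k g).natDegree ≤ n * k := by
    rw [natDegree_expand]; exact Nat.mul_le_mul_right k hg
  induction hf using Submonoid.closure_induction with
  | mem p hp =>
    obtain ⟨c, rfl⟩ | ⟨c, rfl⟩ := hp
    · simp [pow_mul]
    · rw [map_add, expand_X, expand_C, natDegree_X_add_C, one_mul,
        resultant_X_add_C_left _ _ _ hg, ← resultant_X_pow_sub_C_expand (-c) k hg, C_neg,
        sub_neg_eq_add]
  | one => simp
  | mul p q _ _ hp hq =>
    obtain h₀ | h₀ := eq_or_ne (p * q) 0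
    · simp [h₀, pow_mul]
    rw [natDegree_mul (left_ne_zero_of_mul h₀) (right_ne_zero_of_mul h₀),
      resultant_mul_left _ _ _ _ hg, mul_pow, ← hp, ← hq, map_mul, add_mul, ← natDegree_expand,
      ← natDegree_expand, resultant_mul_left _ _ _ _ hgk]

theorem resultant_expand (f : R[X]) {g : R[X]} (k : ℕ) {n : ℕ} (hg : g.natDegree ≤ n) :
    resultant (expand R k f) (expand R k g) (f.natDegree * k) (n * k) =
      resultant f g f.natDegree n ^ k := by
  induction f using induction_of_Splits_of_injective_of_surjective with
  | Splits R f hf => exact resultant_expand_of_splits hf k hg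
  | injective R S φ hφ f ih =>
    apply hφ
    rw [map_pow, ← resultant_map_map, ← resultant_map_map, Polynomial.map_expand,
      Polynomial.map_expand, ← natDegree_map_eq_of_injective hφ f]
    exact ih (natDegree_map_le.trans hg)
  | surjective R S φ hφ f ih =>
    obtain ⟨f, rfl, hf⟩ := exists_degree_eq_of_mem_lifts (Polynomial.map_surjective φ hφ f)
    obtain ⟨g, rfl, hg'⟩ := exists_degree_eq_of_mem_lifts (Polynomial.map_surjective φ hφ g)
    rw [← natDegree_eq_natDegree hg'] at hg
    rw [← natDegree_eq_natDegree hf, ← Polynomial.map_expand, ← Polynomial.map_expand,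
      resultant_map_map, resultant_map_map, ih f hg, map_pow]

end Resultant

section Discriminant

variable {R : Type*} [CommRing R]

theorem discr_map_of_injective [IsDomain R] {S : Type*} [CommRing S] [IsDomain S] {φ : R →+* S}
    (hφ : Function.Injective φ) (f : R[X]) : (f.map φ).discr = φ f.discr := by
  obtain hf | hf := f.natDegree.eq_zero_or_pos
  · obtain ⟨c, rfl⟩ := natDegree_eq_zero.mp hf
    simp
  have hres := congrArg φ (resultant_deriv (natDegree_pos_iff_degree_pos.mp hf))
  have hres' := resultant_deriv (f := f.map φ) 
    (by rwa [degree_map_eq_of_injective hφ, ← natDegree_pos_iff_degree_pos])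
  rw [derivative_map, natDegree_map_eq_of_injective hφ, resultant_map_map, hres,
    leadingCoeff_map_of_injective hφ] at hres'
  have hlc : φ f.leadingCoeff ≠ 0 := by
    rw [map_ne_zero_iff φ hφ, leadingCoeff_ne_zero]; rintro rfl; simp at hf
  simpa [hlc] using hres'.symm

theorem discr_C_mul [IsDomain R] {c : R} (hc : c ≠ 0) (f : R[X]) :
    (C c * f).discr = (c ^ (f.natDegree - 1)) ^ 2 * f.discr := by
  obtain hf | hf := f.natDegree.eq_zero_or_pos
  · obtain ⟨d, rfl⟩ := natDegree_eq_zero.mp hf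
    rw [← C_mul, discr_C, discr_C]
    simp
  have hlc : c * f.leadingCoeff ≠ 0 :=
    mul_ne_zero hc (leadingCoeff_ne_zero.mpr (ne_zero_of_natDegree_gt hf))
  have hres := resultant_deriv (f := C c * f)
    (by rwa [degree_C_mul hc, ← natDegree_pos_iff_degree_pos])
  rw [derivative_C_mul, natDegree_C_mul hc, resultant_C_mul_left, resultant_C_mul_right,
    resultant_deriv (natDegree_pos_iff_degree_pos.mp hf), leadingCoeff_mul, leadingCoeff_C,
    ← mul_pow_sub_one hf.ne' c] at hres
  apply mul_left_cancel₀ (mul_ne_zero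
    (pow_ne_zero (f.natDegree * (f.natDegree - 1) / 2) (neg_ne_zero.mpr one_ne_zero)) hlc)
  linear_combination -hres

theorem prod_eval_derivative_prod_X_sub_C {n : ℕ} (v : Fin n → R) :
    ∏ i, (derivative (∏ j, (X - C (v j)))).eval (v i) =
      (-1) ^ (n * (n - 1) / 2) * (Matrix.vandermonde v).det ^ 2 := by
  calc
    _ = ∏ i, ∏ j ∈ {i}ᶜ, (v i - v j) := by
      refine Finset.prod_congr rfl fun i hi => ?_
      rw [← Lagrange.nodal_eq, Lagrange.eval_nodal_derivative_eval_node_eq hi, Lagrange.eval_nodal,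
        ← Finset.compl_singleton]
    _ = ∏ i, ∏ j ∈ Finset.Ioi i, -(v j - v i) ^ 2 := by
      rw [← Finset.prod_prod_Ioi_mul_eq_prod_prod_off_diag fun j i => v i - v j]
      refine Finset.prod_congr rfl fun i _ => Finset.prod_congr rfl fun j _ => ?_
      ring
    _ = (-1) ^ (n * (n - 1) / 2) * (Matrix.vandermonde v).det ^ 2 := by
      have hcard : ∑ i : Fin n, (Finset.Ioi i).card = n * (n - 1) / 2 := by
        simp_rw [Fin.card_Ioi]
        rw [Fin.sum_univ_eq_sum_range (fun i => n - 1 - i),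
          Finset.sum_range_reflect (fun i => i), Finset.sum_range_id]
      simp_rw [Finset.prod_neg, Finset.prod_mul_distrib, Finset.prod_pow_eq_pow_sum, hcard,
        Matrix.det_vandermonde, Finset.prod_pow]

theorem discr_prod_X_sub_C {n : ℕ} (v : Fin n → R) :
    (∏ i, (X - C (v i))).discr = (Matrix.vandermonde v).det ^ 2 := by
  nontriviality R
  obtain rfl | hn := n.eq_zero_or_pos
  · simpa using discr_C (1 : R)
  have hmonic : (∏ i, (X - C (v i))).Monic := monic_prod_X_sub_C v Finset.univ
  have hdeg : (∏ i, (X - C (v i))).natDegree = n := by simp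
  have hres := resultant_deriv (natDegree_pos_iff_degree_pos.mp (hn.trans_eq hdeg.symm))
  have hprod : resultant (∏ i, (X - C (v i))) (derivative (∏ i, (X - C (v i))))
      (∏ i, (X - C (v i))).natDegree ((∏ i, (X - C (v i))).natDegree - 1) =
      ∏ i, (derivative (∏ j, (X - C (v j)))).eval (v i) := by
    rw [resultant_prod_left _ _ _ _ (by simp) (natDegree_derivative_le _)]
    refine Finset.prod_congr rfl fun i _ => ?_
    rw [natDegree_X_sub_C, resultant_X_sub_C_left _ _ _ (natDegree_derivative_le _)]
  rw [hprod, prod_eval_derivative_prod_X_sub_C, hdeg, hmonic.leadingCoeff, mul_one] at hres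
  exact ((isUnit_one.neg.pow _).mul_left_cancel hres).symm

theorem neg_one_pow_choose_two_mul (n k : ℕ) :
    (-1 : R) ^ (n * k).choose 2 = ((-1) ^ n.choose 2) ^ k * (-1) ^ (n * k.choose 2) := by
  have hchoose : (n * k).choose 2 = n.choose 2 * k + n * (n * k.choose 2) := by
    rify
    simp only [Nat.cast_choose_two, Nat.cast_mul]
    ring
  rw [hchoose, pow_add, pow_mul]
  congr 1
  obtain hn | hn := n.even_or_odd
  · simp [hn.mul_right]
  · rw [pow_mul, hn.neg_one_pow]

theorem resultant_expand_X_pow (f : R[X]) {k : ℕ} (hk : k ≠ 0) :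
    resultant (expand R k f) (X ^ (k - 1)) (f.natDegree * k) (k - 1) = f.coeff 0 ^ (k - 1) := by
  rw [resultant_X_pow_right _ _ _ (natDegree_expand k f).le, coeff_zero_eq_eval_zero, expand_eval,
    zero_pow hk, ← coeff_zero_eq_eval_zero, mul_assoc,
    ((Nat.even_mul_pred_self k).mul_left _).neg_one_pow, one_mul]

theorem resultant_expand_derivative (f : R[X]) {k : ℕ} (hf : f.natDegree ≠ 0) (hk : k ≠ 0) :
    resultant (expand R k f) (derivative (expand R k f)) (f.natDegree * k)
      (f.natDegree * k - 1) = (k : R) ^ (f.natDegree * k) * f.coeff 0 ^ (k - 1) *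
        resultant f (derivative f) f.natDegree (f.natDegree - 1) ^ k := by
  have hdeg : f.natDegree * k - 1 = (f.natDegree - 1) * k + (k - 1) := by
    obtain ⟨n, hn⟩ := Nat.exists_eq_succ_of_ne_zero hf
    rw [hn, Nat.succ_mul, Nat.succ_sub_one]
    lia
  have hderiv : derivative (expand R k f) =
      C (k : R) * (expand R k (derivative f) * X ^ (k - 1)) := by
    rw [derivative_expand, C_eq_natCast]
    ring
  have hle : (expand R k (derivative f)).natDegree ≤ (f.natDegree - 1) * k :=
    (natDegree_expand k _).trans_le (Nat.mul_le_mul_right k (natDegree_derivative_le f))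
  rw [hdeg, hderiv, resultant_C_mul_right,
    resultant_mul_right_of_le _ (natDegree_expand k f).le hle (natDegree_X_pow_le _),
    resultant_expand f k (natDegree_derivative_le f), resultant_expand_X_pow f hk]
  ring

theorem discr_expand [IsDomain R] (f : R[X]) {k : ℕ} (hf : f.natDegree ≠ 0) (hk : k ≠ 0) :
    (expand R k f).discr = (-1) ^ (f.natDegree * k.choose 2) * (k : R) ^ (f.natDegree * k) *
      (f.leadingCoeff * f.coeff 0) ^ (k - 1) * f.discr ^ k := by
  have hfk : 0 < (expand R k f).natDegree := by
    rw [natDegree_expand]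
    exact Nat.mul_pos hf.bot_lt hk.bot_lt
  have hlc : f.leadingCoeff ≠ 0 := leadingCoeff_ne_zero.mpr (ne_zero_of_natDegree_gt hf.bot_lt)
  have hres := resultant_deriv (natDegree_pos_iff_degree_pos.mp hfk)
  rw [natDegree_expand, resultant_expand_derivative f hf hk,
    resultant_deriv (natDegree_pos_iff_degree_pos.mp hf.bot_lt),
    ← Nat.choose_two_right (f.natDegree * k), ← Nat.choose_two_right f.natDegree,
    neg_one_pow_choose_two_mul, leadingCoeff_expand hk.bot_lt, mul_pow, mul_pow,
    ← mul_pow_sub_one hk f.leadingCoeff] at hres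
  have hsign : ((-1 : R) ^ (f.natDegree * k.choose 2)) ^ 2 = 1 := by
    rw [← pow_mul, mul_comm, pow_mul, neg_one_sq, one_pow]
  have hunit : ((-1) ^ (f.natDegree.choose 2)) ^ k *
      (-1) ^ (f.natDegree * k.choose 2) * f.leadingCoeff ≠ 0 := by simpa using hlc
  apply mul_left_cancel₀ hunit
  rw [mul_pow f.leadingCoeff]
  linear_combination -hres - ((-1) ^ (f.natDegree.choose 2)) ^ k *
    (k : R) ^ (f.natDegree * k) * f.leadingCoeff * f.leadingCoeff ^ (k - 1) *
    f.coeff 0 ^ (k - 1) * f.discr ^ k * hsign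

theorem discr_expand_two_mul [IsDomain R] (f : R[X]) {k : ℕ} (hf : f.natDegree ≠ 0) (hk : k ≠ 0) :
    (expand R (2 * k) f).discr = (-1) ^ (f.natDegree * k) * f.leadingCoeff * f.coeff 0 *
      ((2 * k : R) ^ (f.natDegree * k) * (f.leadingCoeff * f.coeff 0) ^ (k - 1) *
        f.discr ^ k) ^ 2 := by
  obtain ⟨l, rfl⟩ := Nat.exists_eq_succ_of_ne_zero hk
  have hchoose : (2 * (l + 1)).choose 2 = (l + 1) * (2 * l + 1) := by
    rw [Nat.choose_two_right, mul_assoc, Nat.mul_div_cancel_left _ two_pos]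
    rfl
  have hsign : (-1 : R) ^ (f.natDegree * ((l + 1) * (2 * l + 1))) =
      (-1) ^ (f.natDegree * (l + 1)) := by
    rw [← mul_assoc, mul_comm, pow_mul, Odd.neg_one_pow ⟨l, rfl⟩]
  rw [discr_expand f hf (mul_ne_zero two_ne_zero hk), Nat.succ_eq_add_one, hchoose, hsign,
    show 2 * (l + 1) - 1 = 2 * l + 1 by lia, Nat.add_sub_cancel]
  push_cast
  ring

end Discriminant

section GaloisAction

variable {F : Type*} [Field F]

theorem map_det_vandermonde_of_perm {R : Type*} [CommRing R] {n : ℕ} {v : Fin n → R} (φ : R →+* R)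
    (τ : Equiv.Perm (Fin n)) (hτ : ∀ i, φ (v i) = v (τ i)) :
    φ (Matrix.vandermonde v).det = Equiv.Perm.sign τ * (Matrix.vandermonde v).det := by
  rw [← Matrix.det_permute, RingHom.map_det]
  congr 1
  ext i j
  simp [Matrix.vandermonde_apply, hτ]

section Splits

variable {K : Type*} [Field K] [Algebra F K] {f : F[X]} {n : ℕ}

theorem map_eq_C_mul_prod_rootSet (hf : f.Separable) (hK : (f.map (algebraMap F K)).Splits)
    (e : Fin n ≃ f.rootSet K) :
    f.map (algebraMap F K) = C (algebraMap F K f.leadingCoeff) * ∏ i, (X - C (e i : K)) := by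
  classical
  have hroots : ((f.map (algebraMap F K)).roots.map fun x => X - C x).prod =
      ∏ x ∈ (f.map (algebraMap F K)).roots.toFinset, (X - C x) := by
    rw [Finset.prod_multiset_map_count]
    refine Finset.prod_congr rfl fun x hx => ?_
    rw [Multiset.count_eq_one_of_mem (nodup_roots hf.map) (Multiset.mem_toFinset.mp hx), pow_one]
  rw [hK.eq_prod_roots, hroots, leadingCoeff_map, e.prod_comp fun x => X - C (x : K)]
  congr 1
  exact (Finset.prod_coe_sort _ fun x => X - C x).symm

theorem algebraMap_discr_eq_sq (hf : f.Separable) (hK : (f.map (algebraMap F K)).Splits)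
    (e : Fin n ≃ f.rootSet K) :
    algebraMap F K f.discr = (algebraMap F K f.leadingCoeff ^ (n - 1) *
      (Matrix.vandermonde fun i => (e i : K)).det) ^ 2 := by
  have hlc : algebraMap F K f.leadingCoeff ≠ 0 := by simpa using hf.ne_zero
  rw [← discr_map_of_injective (algebraMap F K).injective, map_eq_C_mul_prod_rootSet hf hK e,
    discr_C_mul hlc, discr_prod_X_sub_C, natDegree_finsetProd_X_sub_C_eq_card, Finset.card_univ,
    Fintype.card_fin, mul_pow]

theorem det_vandermonde_rootSet_ne_zero (e : Fin n ≃ f.rootSet K) :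
    (Matrix.vandermonde fun i => (e i : K)).det ≠ 0 :=
  Matrix.det_vandermonde_ne_zero_iff.mpr (Subtype.val_injective.comp e.injective)

end Splits

theorem discr_ne_zero_of_separable {f : F[X]} (hf : f.Separable) : f.discr ≠ 0 := by
  have hdiscr := algebraMap_discr_eq_sq hf (SplittingField.splits f) (Fintype.equivFin _).symm
  rw [← map_ne_zero (algebraMap F f.SplittingField), hdiscr]
  exact pow_ne_zero 2 (mul_ne_zero (pow_ne_zero _ (by simpa using hf.ne_zero))
    (det_vandermonde_rootSet_ne_zero _))

theorem isSquare_mul_sq_iff {x y : F} (hy : y ≠ 0) : IsSquare (x * y ^ 2) ↔ IsSquare x := by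
  refine ⟨fun h => ?_, fun h => h.mul (IsSquare.sq y)⟩
  simpa [hy] using h.div (IsSquare.sq y)

theorem mem_range_algebraMap_iff_isSquare {K : Type*} [Field K] [Algebra F K] {d : F} {δ : K}
    (hδ : algebraMap F K d = δ ^ 2) : δ ∈ Set.range (algebraMap F K) ↔ IsSquare d := by
  rw [isSquare_iff_exists_sq]
  constructor
  · rintro ⟨c, rfl⟩
    exact ⟨c, (algebraMap F K).injective (by rw [hδ, map_pow])⟩
  · rintro ⟨c, rfl⟩
    rw [map_pow, sq_eq_sq_iff_eq_or_eq_neg] at hδ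
    obtain hc | hc := hδ
    · exact ⟨c, hc⟩
    · exact ⟨-c, by rw [map_neg, hc, neg_neg]⟩

variable {Ω : Type*} [Field Ω] [Algebra F Ω] [DecidableEq Ω]

theorem gal_apply_det_vandermonde {f : F[X]} [Fact (f.map (algebraMap F Ω)).Splits] {n : ℕ}
    (e : Fin n ≃ f.rootSet f.SplittingField) (σ : f.Gal) :
    σ (Matrix.vandermonde fun i => (e i : f.SplittingField)).det =
      Equiv.Perm.sign (Gal.galActionHom f Ω σ) *
        (Matrix.vandermonde fun i => (e i : f.SplittingField)).det := by
  let τ := (e.trans (Gal.rootsEquivRoots f Ω)).symm.permCongr (Gal.galActionHom f Ω σ)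
  have hτ (i : Fin n) : σ (e i) = e (τ i) := by
    have hact : Gal.galActionHom f Ω σ (Gal.rootsEquivRoots f Ω (e i)) =
        Gal.rootsEquivRoots f Ω (σ • e i) := by
      change Gal.rootsEquivRoots f Ω (σ • (Gal.rootsEquivRoots f Ω).symm _) = _
      rw [Equiv.symm_apply_apply]
    simp only [τ, Equiv.permCongr_apply, Equiv.symm_symm, Equiv.trans_apply, hact,
      Equiv.symm_trans_apply, Equiv.symm_apply_apply, Equiv.apply_symm_apply]
    rfl
  rw [← Equiv.Perm.sign_permCongr (e.trans (Gal.rootsEquivRoots f Ω)).symm]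
  exact map_det_vandermonde_of_perm (σ : f.SplittingField →+* f.SplittingField) τ hτ

theorem forall_sign_galActionHom_eq_one_iff_isSquare_discr {f : F[X]}
    [Fact (f.map (algebraMap F Ω)).Splits] (hf : f.Separable) (h2 : (2 : F) ≠ 0) :
    (∀ σ : f.Gal, Equiv.Perm.sign (Gal.galActionHom f Ω σ) = 1) ↔ IsSquare f.discr := by
  have : IsGalois F f.SplittingField := IsGalois.of_separable_splitting_field hf
  let e := (Fintype.equivFin (f.rootSet f.SplittingField)).symm
  have hδ := algebraMap_discr_eq_sq hf (SplittingField.splits f) e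
  set δ := algebraMap F f.SplittingField f.leadingCoeff ^ _ * _ with hδ_def
  have hδ₀ : δ ≠ 0 := by
    rw [← sq_eq_zero_iff.ne, ← hδ]
    simpa using discr_ne_zero_of_separable hf
  have h1 : (-1 : f.SplittingField) ≠ 1 := fun h => h2 <|
    (algebraMap F f.SplittingField).injective (by rw [map_ofNat, map_zero]; linear_combination -h)
  have hσ (σ : f.Gal) : Equiv.Perm.sign (Gal.galActionHom f Ω σ) = 1 ↔ σ δ = δ := by
    have hlc : σ (algebraMap F f.SplittingField f.leadingCoeff) = algebraMap F _ f.leadingCoeff :=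
      AlgEquiv.commutes (A₁ := f.SplittingField) σ _
    rw [hδ_def, map_mul, map_pow, hlc, gal_apply_det_vandermonde (Ω := Ω), mul_left_comm, ← hδ_def,
      mul_eq_right₀ hδ₀]
    obtain h | h := Int.units_eq_one_or (Equiv.Perm.sign (Gal.galActionHom f Ω σ)) <;>
      simp [h, h1]
  rw [← mem_range_algebraMap_iff_isSquare hδ, IsGalois.mem_range_algebraMap_iff_fixed]
  exact forall_congr' hσ

theorem galois_group_even_iff_b_square_general
    {f g : F[X]} [Fact (f.map (algebraMap F Ω)).Splits] {k : ℕ} (hf : f = expand F (2 * k) g)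
    (hg : g.natDegree ≠ 0) (hk : k ≠ 0) (hsep : f.Separable) :
    (∀ σ : f.Gal, Equiv.Perm.sign (Gal.galActionHom f Ω σ) = 1) ↔
      IsSquare ((-1) ^ (g.natDegree * k) * g.leadingCoeff * g.coeff 0) := by
  have hdiscr : f.discr = _ := hf ▸ discr_expand_two_mul g hg hk
  have hdiscr₀ := discr_ne_zero_of_separable hsep
  rw [hdiscr] at hdiscr₀
  have hsq := pow_ne_zero_iff two_ne_zero |>.mp (right_ne_zero_of_mul hdiscr₀)
  have h2 : (2 : F) ≠ 0 := by
    intro h2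
    simp [h2, hg, hk] at hsq
  rw [forall_sign_galActionHom_eq_one_iff_isSquare_discr hsep h2, hdiscr, isSquare_mul_sq_iff hsq]

end GaloisAction

theorem galois_group_even_iff_b_square (a b : ℚ) (f : ℚ[X])
    (hf : f = X ^ 12 + C a * X ^ 6 + C b) (hirr : Irreducible f) :
    (∀ σ : f.Gal, Equiv.Perm.sign (Polynomial.Gal.galActionHom f ℂ σ) = 1) ↔
      ∃ s : ℚ, s ^ 2 = b := by
  have hexpand : f = expand ℚ (2 * 3) (C 1 * X ^ 2 + C a * X + C b) := by
    simp [hf, ← pow_mul]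
  have hdeg : (C 1 * X ^ 2 + C a * X + C b).natDegree = 2 := natDegree_quadratic one_ne_zero
  rw [galois_group_even_iff_b_square_general hexpand (hdeg.trans_ne two_ne_zero) three_ne_zero
    hirr.separable, hdeg, leadingCoeff_quadratic one_ne_zero]
  have hb : (-1) ^ (2 * 3) * 1 * (C 1 * X ^ 2 + C a * X + C b).coeff 0 = b := by norm_num
  rw [hb, isSquare_iff_exists_sq]
  exact exists_congr fun s => eq_comm
end

section
/- Let a, b ∈ ℚ and suppose f(x) = x^12 + a·x^6 + b is irreducible over ℚ. Let g₄(x) = x^4 + a·x^2 + b. Then the order of the Galois group of f over ℚ is at most 18 times the order of the Galois group of g₄ over ℚ. -/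
open Polynomial

/-!
Write `f = h(X ^ 6)` and `g₄ = h(X ^ 2)` with `h = Y ^ 2 + a Y + b`. For `m` and `n` coprime, the
kernel of the restriction from the Galois group of `h(X ^ (m * n))` to that of `h(X ^ m)` is small:
choose one root `c` of `h(X ^ (m * n))` for each root of `h`. If `x` is any root with
`x ^ (m * n) = c ^ (m * n)`, then a kernel element fixes `x ^ n`, a root of `h(X ^ m)`, while
`x ^ m` is `c ^ m` times an `n`-th root of unity. Coprimality recovers `x` from `x ^ m` and `x ^ n`,
so a kernel element is determined by its action on the `n`-th roots of unity, for which there are at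
most `φ n` possibilities, and by the image of each `c`, a root of `X ^ n - c ^ n`. The kernel
therefore has order at most `φ n * n ^ deg h`, which is `2 * 3 ^ 2 = 18` in the case at hand.
-/

theorem eq_of_pow_eq_pow_of_coprime {G₀ : Type*} [CommGroupWithZero G₀] {x y : G₀} {m n : ℕ}
    (hmn : m.Coprime n) (hm : x ^ m = y ^ m) (hn : x ^ n = y ^ n) : x = y := by
  rcases eq_or_ne y 0 with rfl | hy
  · have hx : x ^ (m + n) = 0 ^ (m + n) := by rw [pow_add, hm, hn, ← pow_add]
    have hmn₀ : m + n ≠ 0 := fun h ↦ by simp_all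
    rwa [zero_pow hmn₀, pow_eq_zero_iff hmn₀] at hx
  · have hm₁ : (x / y) ^ m = 1 := by rw [div_pow, hm, div_self (pow_ne_zero m hy)]
    have hn₁ : (x / y) ^ n = 1 := by rw [div_pow, hn, div_self (pow_ne_zero n hy)]
    exact (div_eq_one_iff_eq hy).mp ((pow_eq_one_iff_of_coprime hmn).mp ⟨hm₁, hn₁⟩)

theorem card_mulAut_rootsOfUnity_le (R : Type*) [CommRing R] [IsDomain R] (n : ℕ) [NeZero n] :
    Nat.card (MulAut (rootsOfUnity n R)) ≤ n.totient := by
  have hdvd : Nat.card (rootsOfUnity n R) ∣ n := by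
    rw [← IsCyclic.exponent_eq_card]
    exact Monoid.exponent_dvd_of_forall_pow_eq_one fun ζ ↦ Subtype.ext ζ.2
  rw [IsCyclic.card_mulAut]
  exact Nat.le_of_dvd (Nat.totient_pos.mpr (NeZero.pos n)) (Nat.totient_dvd_of_dvd hdvd)

theorem map_eq_map_of_pow_mul_eq {L M H : Type*} [Field L] [Field M] [FunLike H L M]
    [RingHomClass H L M] {m n : ℕ} (hmn : m.Coprime n) {σ τ : H} {x c : L}
    (hμ : ∀ ζ : L, ζ ^ n = 1 → σ ζ = τ ζ) (hxn : σ (x ^ n) = τ (x ^ n)) (hc : σ c = τ c)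
    (hxc : x ^ (m * n) = c ^ (m * n)) : σ x = τ x := by
  rcases eq_or_ne n 0 with rfl | hn
  · exact hμ x (pow_zero x)
  rw [pow_mul, pow_mul] at hxc
  have hxm : σ (x ^ m) = τ (x ^ m) := by
    rcases eq_or_ne (c ^ m) 0 with hc₀ | hc₀
    · rw [hc₀, zero_pow hn, pow_eq_zero_iff hn] at hxc
      rw [hxc, map_zero, map_zero]
    · have hζ : (x ^ m / c ^ m) ^ n = 1 := by rw [div_pow, hxc, div_self (pow_ne_zero n hc₀)]
      rw [← div_mul_cancel₀ (x ^ m) hc₀, map_mul, map_mul, hμ _ hζ, map_pow, map_pow, hc]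
  simp only [map_pow] at hxm hxn
  exact eq_of_pow_eq_pow_of_coprime hmn hxm hxn

theorem card_nthRootsFinset_le {R : Type*} [CommRing R] [IsDomain R] (n : ℕ) (a : R) :
    (nthRootsFinset n a).card ≤ n := by
  classical
  rw [nthRootsFinset_def]
  exact (Multiset.toFinset_card_le _).trans (card_nthRoots n a)

section

variable {F L : Type*} [Field F] [Field L] [Algebra F L] {m n : ℕ}

theorem card_subgroup_le_totient_mul_pow (hn : n ≠ 0) (hmn : m.Coprime n) {S T : Set L}
    (hS : Algebra.adjoin F S = ⊤) (hTS : T ⊆ S) (hT : T.Finite)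
    (hST : ∀ x ∈ S, ∃ c ∈ T, x ^ (m * n) = c ^ (m * n)) (N : Subgroup Gal(L/F))
    (hN : ∀ σ ∈ N, ∀ x ∈ S, σ (x ^ n) = x ^ n) :
    Nat.card N ≤ n.totient * n ^ T.ncard := by
  have : NeZero n := ⟨hn⟩
  have : Fintype T := hT.fintype
  have : Finite (MulAut (rootsOfUnity n L)) := inferInstanceAs (Finite (_ ≃* _))
  let Φ (σ : N) : MulAut (rootsOfUnity n L) × ∀ c : T, nthRootsFinset n ((c : L) ^ n) :=
    ((σ.1 : L ≃* L).restrictRootsOfUnity n, fun c ↦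
      ⟨σ.1 c, (mem_nthRootsFinset (Nat.pos_of_ne_zero hn) _).mpr <| by
        rw [← map_pow, hN σ.1 σ.2 c (hTS c.2)]⟩)
  have hΦ : Function.Injective Φ := by
    intro σ τ hστ
    obtain ⟨hroots, himages⟩ := Prod.ext_iff.mp hστ
    have hμ (ζ : L) (hζ : ζ ^ n = 1) : σ.1 ζ = τ.1 ζ :=
      congr_arg (fun ψ : MulAut (rootsOfUnity n L) ↦
        ((ψ (rootsOfUnity.mkOfPowEq ζ hζ) : Lˣ) : L)) hroots
    have hστT (c : L) (hc : c ∈ T) : σ.1 c = τ.1 c := Subtype.ext_iff.mp (congr_fun himages ⟨c, hc⟩)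
    have hστS : S.EqOn (σ.1 : L →ₐ[F] L) (τ.1 : L →ₐ[F] L) := by
      intro x hx
      obtain ⟨c, hc, hxc⟩ := hST x hx
      have hxn : σ.1 (x ^ n) = τ.1 (x ^ n) := by rw [hN σ.1 σ.2 x hx, hN τ.1 τ.2 x hx]
      exact map_eq_map_of_pow_mul_eq hmn hμ hxn (hστT c hc) hxc
    exact Subtype.ext <| AlgEquiv.coe_toAlgHom_injective <| AlgHom.ext_of_adjoin_eq_top hS hστS
  calc Nat.card N ≤ Nat.card (MulAut (rootsOfUnity n L)) *
        Nat.card (∀ c : T, nthRootsFinset n ((c : L) ^ n)) :=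
        (Nat.card_le_card_of_injective Φ hΦ).trans_eq (Nat.card_prod _ _)
    _ ≤ n.totient * n ^ T.ncard := by
        gcongr
        · exact card_mulAut_rootsOfUnity_le L n
        · rw [Nat.card_pi, ← Nat.card_coe_set_eq, Nat.card_eq_fintype_card]
          refine Finset.prod_le_pow_card _ _ _ fun c _ ↦ ?_
          rw [Nat.card_eq_finsetCard]
          exact card_nthRootsFinset_le n _

theorem pow_mem_rootSet_of_mem_rootSet_expand {h : F[X]} {x : L}
    (hx : x ∈ (expand F n h).rootSet L) : x ^ n ∈ h.rootSet L := by
  obtain ⟨hne, hroot⟩ := mem_rootSet.mp hx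
  exact mem_rootSet.mpr ⟨fun h₀ ↦ hne (by rw [h₀, map_zero]), by rwa [expand_aeval] at hroot⟩

theorem exists_subset_rootSet_expand (h : F[X]) (k : ℕ) :
    ∃ T ⊆ (expand F k h).rootSet L, T.ncard ≤ h.natDegree ∧
      ∀ x ∈ (expand F k h).rootSet L, ∃ c ∈ T, x ^ k = c ^ k := by
  obtain ⟨T, hTS, hT⟩ := Set.exists_subset_bijOn ((expand F k h).rootSet L) (· ^ k)
  refine ⟨T, hTS, ?_, fun x hx ↦ ?_⟩
  · calc T.ncard = ((· ^ k) '' (expand F k h).rootSet L).ncard := by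
          rw [← hT.image_eq, hT.injOn.ncard_image]
      _ ≤ (h.rootSet L).ncard := Set.ncard_le_ncard
          (Set.image_subset_iff.mpr fun _ ↦ pow_mem_rootSet_of_mem_rootSet_expand)
          (rootSet_finite h L)
      _ ≤ h.natDegree := ncard_rootSet_le h L
  · obtain ⟨c, hc, hcx⟩ := hT.surjOn (Set.mem_image_of_mem _ hx)
    exact ⟨c, hc, hcx.symm⟩

theorem apply_eq_of_mem_ker_restrict {p : F[X]} [Fact (p.map (algebraMap F L)).Splits]
    {σ : Gal(L/F)} (hσ : σ ∈ (Gal.restrict p L).ker) {x : L} (hx : x ∈ p.rootSet L) : σ x = x := by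
  rw [← Gal.restrict_smul σ ⟨x, hx⟩, MonoidHom.mem_ker.mp hσ, one_smul]

theorem card_gal_expand_mul_le (hn : n ≠ 0) (hmn : m.Coprime n) (h : F[X]) :
    Nat.card (expand F (m * n) h).Gal ≤
      n.totient * n ^ h.natDegree * Nat.card (expand F m h).Gal := by
  set f := expand F (m * n) h with hf
  set g := expand F m h
  have hfg : f = expand F n g := by rw [hf, mul_comm, ← expand_expand]
  have : Fact (g.map (algebraMap F f.SplittingField)).Splits := ⟨by
    rw [hfg, expand_eq_comp_X_pow]
    exact Gal.splits_in_splittingField_of_comp g _ (by rwa [natDegree_X_pow])⟩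
  let ρ := Gal.restrict g f.SplittingField
  obtain ⟨T, hTS, hTcard, hST⟩ :=
    exists_subset_rootSet_expand (L := f.SplittingField) h (m * n)
  have hker : Nat.card ρ.ker ≤ n.totient * n ^ T.ncard :=
    card_subgroup_le_totient_mul_pow hn hmn (SplittingField.adjoin_rootSet f) hTS
      ((rootSet_finite f _).subset hTS) hST ρ.ker fun σ hσ x hx ↦
        apply_eq_of_mem_ker_restrict hσ (pow_mem_rootSet_of_mem_rootSet_expand (hfg ▸ hx))
  calc Nat.card f.Gal = Nat.card ρ.ker * Nat.card ρ.range := by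
        rw [← Subgroup.index_ker, Subgroup.card_mul_index]; rfl
    _ ≤ n.totient * n ^ h.natDegree * Nat.card g.Gal :=
        Nat.mul_le_mul
          (hker.trans (by gcongr; exact Nat.pos_of_ne_zero hn)) (Subgroup.card_le_card_group _)

end

theorem card_gal_le_eighteen_mul_card_gal_quartic_general {F : Type*} [Field F] (a b : F)
    (f g₄ : F[X]) (hf : f = X ^ 12 + C a * X ^ 6 + C b) (hg : g₄ = X ^ 4 + C a * X ^ 2 + C b) :
    Nat.card f.Gal ≤ 18 * Nat.card g₄.Gal := by
  let h : F[X] := X ^ 2 + C a * X + C b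
  have hdeg : h.natDegree = 2 := by unfold h; compute_degree!
  have hf_expand : f = expand F (2 * 3) h := by simp [h, hf, ← pow_mul]
  have hg_expand : g₄ = expand F 2 h := by simp [h, hg, ← pow_mul]
  have key := card_gal_expand_mul_le (m := 2) (n := 3) (by norm_num) (by norm_num) h
  rwa [← hf_expand, ← hg_expand, hdeg, Nat.totient_prime Nat.prime_three] at key

theorem card_gal_le_eighteen_mul_card_gal_quartic (a b : ℚ) (f g₄ : ℚ[X])
    (hf : f = X ^ 12 + C a * X ^ 6 + C b) (hirr : Irreducible f)
    (hg : g₄ = X ^ 4 + C a * X ^ 2 + C b) :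
    Nat.card f.Gal ≤ 18 * Nat.card g₄.Gal :=
  card_gal_le_eighteen_mul_card_gal_quartic_general a b f g₄ hf hg
end

section
/- Let a, b ∈ ℚ and suppose f(x) = x^12 + a·x^6 + b is irreducible over ℚ. Let g₆(x) = x^6 + a·x^3 + b. Then the order of the Galois group of f over ℚ is at most 4 times the order of the Galois group of g₆ over ℚ. -/
open Polynomial

/-!
Let `k` be odd and let `E` be a splitting field of `p(X ^ (2 * k))`. The squares of the roots are
roots of `p(X ^ k)`, so `Gal(E/F)` maps onto the Galois group of `p(X ^ k)`, and an automorphism in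
the kernel sends each root `z` of `p(X ^ (2 * k))` to `± z`. Two nonzero roots with the same
`2 * k`-th power differ, because `k` is odd, by a sign and a power of the quotient of their squares;
so the automorphism is determined by one sign for each root of `p`, and the kernel has at most
`2 ^ p.natDegree` elements. The sextic is the case `p = X ^ 2 + a * X + b`, `k = 3`.
-/

theorem mem_of_pow_two_mul_eq_of_sq_mem {K S : Type*} [Field K] [SetLike S K] [SubfieldClass S K]
    (N : S) {k : ℕ} (hk : Odd k) {x z : K} (hxz : z ^ (2 * k) = x ^ (2 * k)) (hx : x ∈ N)
    (hz : z ^ 2 ∈ N) : z ∈ N := by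
  obtain rfl | hz0 := eq_or_ne z 0
  · exact zero_mem N
  obtain ⟨m, rfl⟩ := hk
  have hquot : x * (x ^ 2 / z ^ 2) ^ m ∈ N :=
    mul_mem hx (pow_mem (div_mem (pow_mem hx 2) hz) m)
  have hx_pow : x * (x ^ 2 / z ^ 2) ^ m = x ^ (2 * m + 1) / z ^ (2 * m) := by
    rw [div_pow, ← pow_mul, ← pow_mul, pow_succ', mul_div_assoc]
  have hz_pow : z ^ (2 * m + 1) / z ^ (2 * m) = z := by
    rw [pow_succ', mul_div_cancel_right₀ _ (pow_ne_zero _ hz0)]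
  have hsq : (z ^ (2 * m + 1)) ^ 2 = (x ^ (2 * m + 1)) ^ 2 := by
    rw [← pow_mul', ← pow_mul', hxz]
  obtain h | h := sq_eq_sq_iff_eq_or_eq_neg.1 hsq
  · rwa [hx_pow, ← h, hz_pow] at hquot
  · rwa [hx_pow, ← neg_mem_iff, ← neg_div, ← h, hz_pow] at hquot

theorem card_le_two_pow_of_smul_sq_eq {G R ι : Type*} [Group G] [CommRing R] [NoZeroDivisors R]
    [MulAction G R] [Finite ι] (z : ι → R) (hsq : ∀ (g : G) (i : ι), (g • z i) ^ 2 = z i ^ 2)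
    (hfix : ∀ g : G, (∀ i, g • z i = z i) → g = 1) : Nat.card G ≤ 2 ^ Nat.card ι := by
  suffices hinj : Function.Injective fun g : G ↦ {i | g • z i = z i} by
    have := Fintype.ofFinite ι
    rw [Nat.card_eq_fintype_card (α := ι), ← Fintype.card_set, ← Nat.card_eq_fintype_card]
    exact Nat.card_le_card_of_injective _ hinj
  intro g g' hgg'
  have heq (i : ι) : g • z i = g' • z i := by
    have hiff : g • z i = z i ↔ g' • z i = z i := Set.ext_iff.1 hgg' i
    have hg := sq_eq_sq_iff_eq_or_eq_neg.1 (hsq g i)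
    have hg' := sq_eq_sq_iff_eq_or_eq_neg.1 (hsq g' i)
    grind
  have : g'⁻¹ * g = 1 := hfix _ fun i ↦ by rw [mul_smul, heq, inv_smul_smul]
  exact (inv_mul_eq_one.1 this).symm

theorem pow_mem_rootSet_of_mem_rootSet_expand_s2 {A B : Type*} [CommRing A] [CommRing B] [IsDomain B]
    [Algebra A B] {m n : ℕ} {p : A[X]} {z : B} (hz : z ∈ (expand A (m * n) p).rootSet B) :
    z ^ m ∈ (expand A n p).rootSet B := by
  rw [expand_mul, mem_rootSet', map_expand, expand_aeval] at hz
  exact mem_rootSet'.2 ⟨fun h ↦ hz.1 (by rw [h, map_zero]), hz.2⟩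

section GaloisGroup

variable {F E : Type*} [Field F] [Field E] [Algebra F E]

theorem apply_eq_self_of_mem_ker_restrict {p : F[X]} [Fact (p.map (algebraMap F E)).Splits]
    {σ : Gal(E/F)} (hσ : σ ∈ (Gal.restrict p E).ker) {x : E} (hx : x ∈ p.rootSet E) : σ x = x := by
  rw [← Gal.restrict_smul σ ⟨x, hx⟩, MonoidHom.mem_ker.1 hσ, one_smul]

theorem card_eq_card_ker_restrict_mul_card_gal [Normal F E] (p : F[X])
    [Fact (p.map (algebraMap F E)).Splits] :
    Nat.card Gal(E/F) = Nat.card (Gal.restrict p E).ker * Nat.card p.Gal := by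
  rw [← (Gal.restrict p E).ker.card_mul_index, Subgroup.index_ker,
    MonoidHom.range_eq_top.2 (Gal.restrict_surjective p E), Subgroup.card_top]

theorem splits_expand_splittingField_expand_mul {m : ℕ} (hm : m ≠ 0) (n : ℕ) (p : F[X]) :
    ((expand F n p).map (algebraMap F (expand F (m * n) p).SplittingField)).Splits := by
  rw [expand_mul, expand_eq_comp_X_pow m]
  exact Gal.splits_in_splittingField_of_comp _ _ (by rwa [natDegree_X_pow])

theorem card_ker_restrict_expand_le {k : ℕ} (hk : Odd k) (p : F[X])
    [IsSplittingField F E (expand F (2 * k) p)]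
    [Fact ((expand F k p).map (algebraMap F E)).Splits] :
    Nat.card (Gal.restrict (expand F k p) E).ker ≤ 2 ^ p.natDegree := by
  set Z : Set E := (expand F (2 * k) p).rootSet E
  set R : Set E := (· ^ (2 * k)) '' Z
  have hsq (σ : (Gal.restrict (expand F k p) E).ker) {z : E} (hz : z ∈ Z) : σ.1 (z ^ 2) = z ^ 2 :=
    apply_eq_self_of_mem_ker_restrict σ.2 (pow_mem_rootSet_of_mem_rootSet_expand_s2 hz)
  have hR : R ⊆ p.rootSet E := by
    rintro _ ⟨z, hz, rfl⟩
    rw [← expand_one p]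
    exact pow_mem_rootSet_of_mem_rootSet_expand_s2 (by rwa [mul_one])
  have hR_card : Nat.card R ≤ p.natDegree :=
    (Set.ncard_le_ncard hR (rootSet_finite p E)).trans (ncard_rootSet_le p E)
  have : Finite R := (rootSet_finite p E).subset hR
  choose r hrZ hr_pow using fun u : R ↦ u.2
  refine (card_le_two_pow_of_smul_sq_eq r ?_ fun σ hσ ↦ ?_).trans
    (Nat.pow_le_pow_right two_pos hR_card)
  · exact fun σ u ↦ (map_pow σ.1 _ 2).symm.trans (hsq σ (hrZ u))
  have hfix {z : E} (hz : z ∈ Z) : σ.1 z = z :=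
    let u : R := ⟨z ^ (2 * k), z, hz, rfl⟩
    mem_of_pow_two_mul_eq_of_sq_mem ((σ.1 : E →+* E).eqLocusField (RingHom.id E)) hk
      (hr_pow u).symm (hσ u) (hsq σ hz)
  refine Subtype.ext (AlgEquiv.coe_toAlgHom_injective ?_)
  exact AlgHom.ext_of_adjoin_eq_top
    (IsSplittingField.adjoin_rootSet E (expand F (2 * k) p)) fun z hz ↦ hfix hz

theorem card_algEquiv_le_two_pow_mul_card_gal {k : ℕ} (hk : Odd k) (p : F[X])
    [IsSplittingField F E (expand F (2 * k) p)]
    [Fact ((expand F k p).map (algebraMap F E)).Splits] :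
    Nat.card Gal(E/F) ≤ 2 ^ p.natDegree * Nat.card (expand F k p).Gal := by
  have : Normal F E := .of_isSplittingField (expand F (2 * k) p)
  rw [card_eq_card_ker_restrict_mul_card_gal (expand F k p)]
  exact Nat.mul_le_mul_right _ (card_ker_restrict_expand_le hk p)

end GaloisGroup

theorem card_gal_le_four_mul_card_gal_sextic_general {F : Type*} [Field F] (p : F[X]) {k : ℕ}
    (hk : Odd k) :
    Nat.card (expand F (2 * k) p).Gal ≤ 2 ^ p.natDegree * Nat.card (expand F k p).Gal :=
  have : Fact ((expand F k p).map (algebraMap F (expand F (2 * k) p).SplittingField)).Splits :=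
    ⟨splits_expand_splittingField_expand_mul two_ne_zero k p⟩
  card_algEquiv_le_two_pow_mul_card_gal hk p

theorem card_gal_le_four_mul_card_gal_sextic (a b : ℚ) (f g₆ : ℚ[X])
    (hf : f = X ^ 12 + C a * X ^ 6 + C b) (hirr : Irreducible f)
    (hg : g₆ = X ^ 6 + C a * X ^ 3 + C b) :
    Nat.card f.Gal ≤ 4 * Nat.card g₆.Gal := by
  have hdeg : (X ^ 2 + C a * X + C b).natDegree = 2 := by compute_degree!
  have hcard := card_gal_le_four_mul_card_gal_sextic_general (X ^ 2 + C a * X + C b) (k := 3)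
    (by decide)
  simpa [hf, hg, hdeg, ← pow_mul] using hcard
end

section
/- Let a, b ∈ ℚ and suppose g(x) = x^4 + a·x^2 + b is irreducible over ℚ, and let θ ∈ ℂ be a root of g. Then for every r ∈ ℚ that is not a square in ℚ, r is a square in the field ℚ(θ) (the subfield of ℂ generated over ℚ by θ) if and only if r·(a^2 − 4b) is a square in ℚ, or there exists s ∈ ℚ with s^2 = b such that r·(−a + 2s) is a square in ℚ or r·(−a − 2s) is a square in ℚ. -/
open Polynomial
open scoped IntermediateField
open IntermediateField hiding algebraMap_mem

/-! Put `α = θ ^ 2`, so that `K(α)` is quadratic over `K` and `K(θ)` is obtained from `K(α)` by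
adjoining the square root `θ` of `α`. In characteristic other than two, an element of a field `F`
becomes a square in `F(√d)`, `d ≠ 0`, if and only if it or its product with `d` is one in `F`. Hence
`r` is a square in `K(θ)` if and only if `r` or `r * α` is a square in `K(α)`. As `K(α)` is
generated by a square root of `a ^ 2 - 4 * b`, the same principle settles the first alternative.
In the second one, if `r * α = y ^ 2` and `y'` is the conjugate of `y`, then
`y * y' = r * s` with `s ^ 2 = α * α' = b`, and
`r * (-a + 2 * s) = r * (α + α') + 2 * r * s = (y + y') ^ 2` is the square of an element of `K`. -/

section

variable {K L : Type*} [Field K] [Field L] [Algebra K L]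

theorem isSquare_iff_exists_mem_sq_eq {F : IntermediateField K L} (x : F) :
    IsSquare x ↔ ∃ y ∈ F, y ^ 2 = (x : L) := by
  simp [isSquare_iff_exists_sq, Subtype.ext_iff, eq_comm]

theorem pow_notMem_range_of_irreducible {g : K[X]} (hg : Irreducible g) {θ : L}
    (hθ : aeval θ g = 0) {n : ℕ} (hn : n ≠ 0) (hdeg : n < g.natDegree) :
    θ ^ n ∉ (algebraMap K L).range := by
  rintro ⟨c, hc⟩
  have hdvd : g ∣ X ^ n - C c := (hg.dvd_iff_aeval_eq_zero hθ).mp (by simp [hc])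
  have hle := natDegree_le_of_dvd hdvd (X_pow_sub_C_ne_zero hn.bot_lt c)
  rw [natDegree_X_pow_sub_C] at hle
  exact hdeg.not_ge hle

theorem eq_zero_of_algebraMap_add_mul_eq_zero {α : L} (hα : α ∉ (algebraMap K L).range) {p q : K}
    (h : algebraMap K L p + algebraMap K L q * α = 0) : p = 0 ∧ q = 0 := by
  have hq : q = 0 := by
    by_contra hq
    refine hα ⟨-p / q, ?_⟩
    have : algebraMap K L q ≠ 0 := by simpa using hq
    rw [map_div₀, map_neg, div_eq_iff this]
    linear_combination -h
  exact ⟨by simpa [hq] using h, hq⟩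

theorem exists_eq_algebraMap_add_mul_of_mem_adjoin {a b : K} {α : L}
    (hα : α ^ 2 + algebraMap K L a * α + algebraMap K L b = 0) {y : L} (hy : y ∈ K⟮α⟯) :
    ∃ p q : K, y = algebraMap K L p + algebraMap K L q * α := by
  have halg : IsAlgebraic K α :=
    ⟨X ^ 2 + C a * X + C b, Monic.ne_zero (by monicity!), by simpa using hα⟩
  rw [← mem_toSubalgebra, adjoin_simple_toSubalgebra_of_isAlgebraic halg] at hy
  induction hy using Algebra.adjoin_induction with
  | mem x hx => exact ⟨0, 1, by simpa using hx⟩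
  | algebraMap c => exact ⟨c, 0, by simp⟩
  | add x y _ _ hx hy =>
    obtain ⟨p, q, rfl⟩ := hx
    obtain ⟨p', q', rfl⟩ := hy
    exact ⟨p + p', q + q', by simp only [map_add]; ring⟩
  | mul x y _ _ hx hy =>
    obtain ⟨p, q, rfl⟩ := hx
    obtain ⟨p', q', rfl⟩ := hy
    refine ⟨p * p' - b * q * q', p * q' + q * p' - a * q * q', ?_⟩
    simp only [map_add, map_sub, map_mul]
    linear_combination algebraMap K L q * algebraMap K L q' * hα

theorem exists_mem_adjoin_sqrt_sq_eq_iff [NeZero (2 : K)] {d : K} (hd : d ≠ 0) {δ : L}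
    (hδ : δ ^ 2 = algebraMap K L d) (x : K) :
    (∃ y ∈ K⟮δ⟯, y ^ 2 = algebraMap K L x) ↔ IsSquare x ∨ IsSquare (x * d) := by
  constructor
  · rintro ⟨y, hy, hyx⟩
    obtain ⟨p, q, rfl⟩ := exists_eq_algebraMap_add_mul_of_mem_adjoin (a := 0) (b := -d)
      (by simp [hδ]) hy
    by_cases hmem : δ ∈ (algebraMap K L).range
    · obtain ⟨e, rfl⟩ := hmem
      refine .inl ⟨p + q * e, (algebraMap K L).injective ?_⟩
      simp only [map_add, map_mul]
      linear_combination -hyx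
    · obtain ⟨hconst, hcoeff⟩ := eq_zero_of_algebraMap_add_mul_eq_zero hmem
        (p := p ^ 2 + q ^ 2 * d - x) (q := 2 * (p * q)) (by
          simp only [map_add, map_sub, map_mul, map_pow, map_ofNat]
          linear_combination hyx - algebraMap K L q ^ 2 * hδ)
      rcases mul_eq_zero.mp ((mul_eq_zero.mp hcoeff).resolve_left two_ne_zero) with rfl | rfl
      · exact .inr ⟨q * d, by linear_combination -d * hconst⟩
      · exact .inl ⟨p, by linear_combination -hconst⟩
  · rintro (⟨t, rfl⟩ | ⟨t, ht⟩)
    · exact ⟨algebraMap K L t, algebraMap_mem _ t, by rw [map_mul, sq]⟩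
    · refine ⟨algebraMap K L (t / d) * δ,
        mul_mem (algebraMap_mem _ _) (mem_adjoin_simple_self K δ), ?_⟩
      rw [mul_pow, hδ, ← map_pow, ← map_mul]
      congr 1
      field_simp
      linear_combination -ht

theorem adjoin_two_mul_add_algebraMap [NeZero (2 : K)] (α : L) (c : K) :
    K⟮2 * α + algebraMap K L c⟯ = K⟮α⟯ := by
  have : NeZero (2 : L) :=
    map_ofNat (algebraMap K L) 2 ▸ .of_injective (algebraMap K L).injective
  apply le_antisymm <;> rw [adjoin_simple_le_iff]
  · exact add_mem (mul_mem (ofNat_mem _ 2) (mem_adjoin_simple_self K α)) (algebraMap_mem _ c)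
  · have hhalf := div_mem (sub_mem (mem_adjoin_simple_self K (2 * α + algebraMap K L c))
      (algebraMap_mem _ c)) (ofNat_mem _ 2)
    rwa [add_sub_cancel_right, mul_div_cancel_left₀ _ two_ne_zero] at hhalf

theorem exists_mem_adjoin_quadratic_sq_eq_iff [NeZero (2 : K)] {a b : K} {α : L}
    (hα : α ^ 2 + algebraMap K L a * α + algebraMap K L b = 0) (hdisc : a ^ 2 - 4 * b ≠ 0)
    (x : K) :
    (∃ y ∈ K⟮α⟯, y ^ 2 = algebraMap K L x) ↔ IsSquare x ∨ IsSquare (x * (a ^ 2 - 4 * b)) := by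
  rw [← adjoin_two_mul_add_algebraMap α a]
  refine exists_mem_adjoin_sqrt_sq_eq_iff hdisc ?_ x
  simp only [map_sub, map_mul, map_pow, map_ofNat]
  linear_combination 4 * hα

theorem exists_mem_adjoin_quadratic_sq_eq_mul_iff {a b : K} {α : L}
    (hα : α ^ 2 + algebraMap K L a * α + algebraMap K L b = 0)
    (hmem : α ∉ (algebraMap K L).range) {x : K} (hx : x ≠ 0) :
    (∃ y ∈ K⟮α⟯, y ^ 2 = algebraMap K L x * α) ↔
      ∃ s, s ^ 2 = b ∧ IsSquare (x * (-a + 2 * s)) := by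
  constructor
  · rintro ⟨y, hy, hyx⟩
    obtain ⟨p, q, rfl⟩ := exists_eq_algebraMap_add_mul_of_mem_adjoin hα hy
    obtain ⟨hconst, hcoeff⟩ := eq_zero_of_algebraMap_add_mul_eq_zero hmem
      (p := p ^ 2 - b * q ^ 2) (q := 2 * p * q - a * q ^ 2 - x) (by
        simp only [map_sub, map_mul, map_pow, map_ofNat]
        linear_combination hyx - algebraMap K L q ^ 2 * hα)
    have hq : q ≠ 0 := by
      rintro rfl
      exact hx (by linear_combination -hcoeff)
    refine ⟨p / q, ?_, 2 * p - a * q, ?_⟩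
    · field_simp
      linear_combination hconst
    · field_simp
      linear_combination (a * q - 2 * p) * hcoeff
  · rintro ⟨s, rfl, t, ht⟩
    have hsq : (α + algebraMap K L s) ^ 2 = algebraMap K L (-a + 2 * s) * α := by
      simp only [map_add, map_neg, map_mul, map_ofNat]
      rw [map_pow] at hα
      linear_combination hα
    have hne : -a + 2 * s ≠ 0 := by
      intro h
      rw [h, map_zero, zero_mul, sq_eq_zero_iff] at hsq
      exact hmem ⟨-s, by rw [map_neg]; linear_combination -hsq⟩
    refine ⟨algebraMap K L (t / (-a + 2 * s)) * (α + algebraMap K L s),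
      mul_mem (algebraMap_mem _ _) (add_mem (mem_adjoin_simple_self K α) (algebraMap_mem _ s)), ?_⟩
    rw [mul_pow, hsq, ← mul_assoc, ← map_pow, ← map_mul]
    congr 2
    field_simp
    linear_combination -ht

theorem sq_sub_four_mul_ne_zero_of_notMem_range [NeZero (2 : K)] {a b : K} {α : L}
    (hα : α ^ 2 + algebraMap K L a * α + algebraMap K L b = 0)
    (hmem : α ∉ (algebraMap K L).range) : a ^ 2 - 4 * b ≠ 0 := by
  intro h
  have hsq : (algebraMap K L a + algebraMap K L 2 * α) ^ 2 = 0 := by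
    have := congrArg (algebraMap K L) h
    simp only [map_sub, map_mul, map_pow, map_ofNat, map_zero] at this ⊢
    linear_combination 4 * hα + this
  exact two_ne_zero (eq_zero_of_algebraMap_add_mul_eq_zero hmem (sq_eq_zero_iff.mp hsq)).2

theorem mem_adjoin_sq_adjoin_iff (θ y : L) : y ∈ K⟮θ ^ 2⟯⟮θ⟯ ↔ y ∈ K⟮θ⟯ := by
  have hle : K⟮θ ^ 2⟯ ≤ K⟮θ⟯ :=
    adjoin_simple_le_iff.mpr (pow_mem (mem_adjoin_simple_self K θ) 2)
  rw [← mem_restrictScalars K, restrictScalars_adjoin_eq_sup, sup_eq_right.mpr hle]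

theorem exists_mem_adjoin_sq_eq_iff_adjoin_sq [NeZero (2 : K)] {θ : L} (hθ : θ ≠ 0) (r : K) :
    (∃ y ∈ K⟮θ⟯, y ^ 2 = algebraMap K L r) ↔
      (∃ y ∈ K⟮θ ^ 2⟯, y ^ 2 = algebraMap K L r) ∨
        ∃ y ∈ K⟮θ ^ 2⟯, y ^ 2 = algebraMap K L r * θ ^ 2 := by
  have : NeZero (2 : K⟮θ ^ 2⟯) :=
    map_ofNat (algebraMap K K⟮θ ^ 2⟯) 2 ▸ .of_injective (algebraMap K K⟮θ ^ 2⟯).injective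
  have hgen : AdjoinSimple.gen K (θ ^ 2) ≠ 0 := by simpa [Subtype.ext_iff] using hθ
  have h := exists_mem_adjoin_sqrt_sq_eq_iff hgen (δ := θ) rfl (algebraMap K K⟮θ ^ 2⟯ r)
  simpa [isSquare_iff_exists_mem_sq_eq, mem_adjoin_sq_adjoin_iff] using h

theorem square_in_quartic_stem_field_iff_general [NeZero (2 : K)] {a b : K} {θ : L}
    (hθ : θ ^ 4 + algebraMap K L a * θ ^ 2 + algebraMap K L b = 0)
    (hmem : θ ^ 2 ∉ (algebraMap K L).range) (r : K) :
    (∃ y ∈ K⟮θ⟯, y ^ 2 = algebraMap K L r) ↔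
      IsSquare r ∨ IsSquare (r * (a ^ 2 - 4 * b)) ∨
        ∃ s, s ^ 2 = b ∧ (IsSquare (r * (-a + 2 * s)) ∨ IsSquare (r * (-a - 2 * s))) := by
  rcases eq_or_ne r 0 with rfl | hr
  · simp
  have hα : (θ ^ 2) ^ 2 + algebraMap K L a * θ ^ 2 + algebraMap K L b = 0 := by rwa [← pow_mul]
  have hθ₀ : θ ≠ 0 := by
    rintro rfl
    exact hmem ⟨0, by simp⟩
  have hsign : (∃ s, s ^ 2 = b ∧ IsSquare (r * (-a + 2 * s))) ↔
      ∃ s, s ^ 2 = b ∧ (IsSquare (r * (-a + 2 * s)) ∨ IsSquare (r * (-a - 2 * s))) := by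
    refine ⟨fun ⟨s, hs, h⟩ ↦ ⟨s, hs, .inl h⟩, ?_⟩
    rintro ⟨s, hs, h | h⟩
    · exact ⟨s, hs, h⟩
    · exact ⟨-s, by rwa [neg_sq], by rwa [mul_neg, ← sub_eq_add_neg]⟩
  rw [exists_mem_adjoin_sq_eq_iff_adjoin_sq hθ₀,
    exists_mem_adjoin_quadratic_sq_eq_iff hα (sq_sub_four_mul_ne_zero_of_notMem_range hα hmem),
    exists_mem_adjoin_quadratic_sq_eq_mul_iff hα hmem hr, hsign, or_assoc]

end

theorem square_in_quartic_stem_field_iff (a b : ℚ) (g : ℚ[X])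
    (hg : g = X ^ 4 + C a * X ^ 2 + C b) (hirr : Irreducible g)
    (θ : ℂ) (hθ : aeval θ g = 0) (r : ℚ) (hr : ¬ ∃ s : ℚ, s ^ 2 = r) :
    (∃ y ∈ IntermediateField.adjoin ℚ ({θ} : Set ℂ), y ^ 2 = (r : ℂ)) ↔
      ((∃ s : ℚ, s ^ 2 = r * (a ^ 2 - 4 * b)) ∨
        ∃ s : ℚ, s ^ 2 = b ∧
          ((∃ t : ℚ, t ^ 2 = r * (-a + 2 * s)) ∨
            (∃ t : ℚ, t ^ 2 = r * (-a - 2 * s)))) := by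
  have hdeg : g.natDegree = 4 := by rw [hg]; compute_degree!
  simpa only [isSquare_iff_exists_sq, eq_comm (b := _ ^ 2), hr, false_or, eq_ratCast] using
    square_in_quartic_stem_field_iff_general (by simpa [hg] using hθ)
      (pow_notMem_range_of_irreducible hirr hθ two_ne_zero (by lia)) r
end

section
/- Let a, b ∈ ℚ and suppose f(x) = x^12 + a·x^6 + b is irreducible over ℚ. Then it is not the case that both b·(a^2 − 4b) is a square in ℚ and 3·(4b − a^2) is a square in ℚ. -/
open Polynomial

/-!
A square is nonnegative, so the two square conditions force `0 ≤ b * (a ^ 2 - 4 * b)` and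
`0 ≤ 4 * b - a ^ 2`. If the discriminant `a ^ 2 - 4 * b` were negative, then `b` would be positive
and the first inequality would fail. Hence it vanishes, and `x ^ 2 + a x + b` is the square of
`x + a / 2`; this contradicts irreducibility for `x = X ^ 6`.
-/

theorem isSquare_quadratic_of_sq_eq_four_mul {K A : Type*} [Field K] [NeZero (2 : K)]
    [CommSemiring A] [Algebra K A] {a b : K} (h : a ^ 2 = 4 * b) (x : A) :
    IsSquare (x ^ 2 + algebraMap K A a * x + algebraMap K A b) := by
  obtain ⟨c, rfl⟩ : ∃ c, a = 2 * c := ⟨a / 2, (mul_div_cancel₀ a two_ne_zero).symm⟩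
  obtain rfl : b = c ^ 2 := by
    refine mul_left_cancel₀ (pow_ne_zero 2 (two_ne_zero' K)) ?_
    linear_combination -h
  refine ⟨x + algebraMap K A c, ?_⟩
  simp only [map_mul, map_pow, map_ofNat]
  ring

theorem mul_discrim_neg {R : Type*} [CommRing R] [LinearOrder R] [IsStrictOrderedRing R]
    {a b c : R} (h : discrim a b c < 0) : a * c * discrim a b c < 0 := by
  have hlt : b ^ 2 < 4 * (a * c) := by
    rwa [discrim, sub_neg, mul_assoc] at h
  have hpos : 0 < a * c := pos_of_mul_pos_right ((sq_nonneg b).trans_lt hlt) zero_le_four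
  exact mul_neg_of_pos_of_neg hpos h

theorem not_both_squares_general {K A : Type*} [Field K] [LinearOrder K] [IsStrictOrderedRing K]
    [CommSemiring A] [Algebra K A] {a b : K} {x : A}
    (hirr : Irreducible (x ^ 2 + algebraMap K A a * x + algebraMap K A b)) :
    ¬ (0 ≤ b * (a ^ 2 - 4 * b) ∧ 0 ≤ 4 * b - a ^ 2) := by
  rintro ⟨hmul, hdiscrim⟩
  have hne : a ^ 2 ≠ 4 * b := fun h ↦
    hirr.not_isSquare (isSquare_quadratic_of_sq_eq_four_mul h x)
  have hneg : discrim 1 a b < 0 := by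
    simpa [discrim] using (sub_nonneg.mp hdiscrim).lt_of_ne hne
  exact hmul.not_gt (by simpa [discrim] using mul_discrim_neg hneg)

theorem not_both_squares (a b : ℚ) (f : ℚ[X])
    (hf : f = X ^ 12 + C a * X ^ 6 + C b) (hirr : Irreducible f) :
    ¬ ((∃ s : ℚ, s ^ 2 = b * (a ^ 2 - 4 * b)) ∧
        (∃ s : ℚ, s ^ 2 = 3 * (4 * b - a ^ 2))) := by
  rintro ⟨⟨s, hs⟩, ⟨t, ht⟩⟩
  have hquad : Irreducible ((X ^ 6) ^ 2 + C a * X ^ 6 + C b) := by rwa [← pow_mul, ← hf]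
  exact not_both_squares_general hquad
    ⟨hs ▸ sq_nonneg s, nonneg_of_mul_nonneg_right (ht ▸ sq_nonneg t) three_pos⟩
end

section
/- Let a, b, r ∈ ℚ with b ≠ 0 and r^2 ≠ b, and suppose r^3 − 3·b·r + a·b = 0. Let θ ∈ ℂ satisfy θ^12 + a·θ^6 + b = 0. Then ( (r/(b − r^2))·θ^10 + ((−b^2 + 3·b·r^2 − r^4)/(b·(b − r^2)))·θ^4 )^3 = b. In particular, b is a cube in the field ℚ(θ). -/
open Polynomial

/-!
Put `x = θ ^ 2`, so that `t = x ^ 3` is a root of `T ^ 2 + a T + b`. If `c ^ 3 = b`, then `α = c x`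
and `β = b / α` satisfy `α ^ 3 + β ^ 3 = -a b`, so that `α + β` is a root of the cubic resolvent.
Conversely, let `r` be a root of the resolvent and look for `α` with `α ^ 2 - r α + b = 0` and
`α ^ 3 = b t`. Reducing the cubic equation by the quadratic one leaves `(r ^ 2 - b) α = b (t + r)`,
which is solvable for `α` because `r ^ 2 ≠ b`. The `α` so found does satisfy both equations, and
`c = α / x` is a cube root of `b`.
-/

section Field

variable {F : Type*} [Field F] {a b r t x : F}

/-- The candidate for the summand `α` of a root `r = α + b / α` of the cubic resolvent with
`α ^ 3 = b * t`, as a rational function of `r` and the root `t` of `T ^ 2 + a T + b`. -/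
def resolventSummand (b r t : F) : F := b * (t + r) / (r ^ 2 - b)

/-- The cube root of `b` attached to a root `x` of `X ^ 6 + a X ^ 3 + b` and a root `r` of the cubic
resolvent. It is `resolventSummand b r (x ^ 3) / x`, with `x⁻¹` eliminated so that it is a
polynomial in `x`. -/
def sexticCubeRoot (a b r x : F) : F := (r * x ^ 5 + (a * r - b) * x ^ 2) / (b - r ^ 2)

lemma ne_zero_of_cubic_resolvent (hrb : r ^ 2 ≠ b) (hr : r ^ 3 - 3 * b * r + a * b = 0) :
    b ≠ 0 := by
  rintro rfl
  have hr0 : r = 0 := by simpa using hr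
  simp [hr0] at hrb

lemma resolventSummand_sq (hrb : r ^ 2 ≠ b) (hr : r ^ 3 - 3 * b * r + a * b = 0)
    (ht : t ^ 2 + a * t + b = 0) :
    resolventSummand b r t ^ 2 = r * resolventSummand b r t - b := by
  have hd : r ^ 2 - b ≠ 0 := sub_ne_zero.mpr hrb
  have hsq : b * (t + r) ^ 2 = (r ^ 2 - b) * (r * t + b) := by
    linear_combination b * ht - t * hr
  unfold resolventSummand
  field_simp
  linear_combination b * hsq

lemma resolventSummand_cube (hrb : r ^ 2 ≠ b) (hr : r ^ 3 - 3 * b * r + a * b = 0)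
    (ht : t ^ 2 + a * t + b = 0) : resolventSummand b r t ^ 3 = b * t := by
  have hquad := resolventSummand_sq hrb hr ht
  have hlin : (r ^ 2 - b) * resolventSummand b r t = b * (t + r) :=
    mul_div_cancel₀ _ (sub_ne_zero.mpr hrb)
  linear_combination (resolventSummand b r t + r) * hquad + hlin

lemma sexticCubeRoot_mul_self (hx : x ^ 6 + a * x ^ 3 + b = 0) :
    sexticCubeRoot a b r x * x = resolventSummand b r (x ^ 3) := by
  have hnum : (r * x ^ 5 + (a * r - b) * x ^ 2) * x = -(b * (x ^ 3 + r)) := by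
    linear_combination r * hx
  rw [sexticCubeRoot, resolventSummand, div_mul_eq_mul_div, hnum, neg_div, ← div_neg, neg_sub]

lemma sexticCubeRoot_cube (hrb : r ^ 2 ≠ b) (hr : r ^ 3 - 3 * b * r + a * b = 0)
    (hx : x ^ 6 + a * x ^ 3 + b = 0) : sexticCubeRoot a b r x ^ 3 = b := by
  have hx0 : x ≠ 0 := by
    rintro rfl
    exact ne_zero_of_cubic_resolvent hrb hr (by simpa using hx)
  refine mul_right_cancel₀ (pow_ne_zero 3 hx0) ?_
  rw [← mul_pow, sexticCubeRoot_mul_self hx]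
  exact resolventSummand_cube hrb hr (by linear_combination hx)

lemma sexticCubeRoot_eq_add (hrb : r ^ 2 ≠ b) (hr : r ^ 3 - 3 * b * r + a * b = 0) (x : F) :
    sexticCubeRoot a b r x = r / (b - r ^ 2) * x ^ 5 +
      (-b ^ 2 + 3 * b * r ^ 2 - r ^ 4) / (b * (b - r ^ 2)) * x ^ 2 := by
  have hb : b ≠ 0 := ne_zero_of_cubic_resolvent hrb hr
  have hcoeff : -b ^ 2 + 3 * b * r ^ 2 - r ^ 4 = b * (a * r - b) := by
    linear_combination -r * hr
  rw [hcoeff, mul_div_mul_left _ _ hb, sexticCubeRoot]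
  ring

end Field

theorem cube_root_of_b_in_stem_field_general {K L : Type*} [Field K] [Field L] [Algebra K L]
    {a b r : K} (hrb : r ^ 2 ≠ b) (hr : r ^ 3 - 3 * b * r + a * b = 0) {x : L}
    (hx : x ^ 6 + algebraMap K L a * x ^ 3 + algebraMap K L b = 0) :
    (algebraMap K L (r / (b - r ^ 2)) * x ^ 5 +
        algebraMap K L ((-b ^ 2 + 3 * b * r ^ 2 - r ^ 4) / (b * (b - r ^ 2))) * x ^ 2) ^ 3
      = algebraMap K L b ∧
      ∃ y ∈ IntermediateField.adjoin K ({x} : Set L), y ^ 3 = algebraMap K L b := by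
  set φ := algebraMap K L
  have hrb' : φ r ^ 2 ≠ φ b := by
    rw [← map_pow]
    exact φ.injective.ne hrb
  have hr' : φ r ^ 3 - 3 * φ b * φ r + φ a * φ b = 0 := by
    simpa [map_ofNat φ] using congrArg φ hr
  have hcube : (φ (r / (b - r ^ 2)) * x ^ 5 +
      φ ((-b ^ 2 + 3 * b * r ^ 2 - r ^ 4) / (b * (b - r ^ 2))) * x ^ 2) ^ 3 = φ b := by
    simpa [map_ofNat φ, sexticCubeRoot_eq_add hrb' hr'] using sexticCubeRoot_cube hrb' hr' hx
  have hmem := IntermediateField.mem_adjoin_simple_self K x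
  have hcoeff := (IntermediateField.adjoin K {x}).algebraMap_mem
  exact ⟨hcube, _, add_mem (mul_mem (hcoeff _) (pow_mem hmem 5))
    (mul_mem (hcoeff _) (pow_mem hmem 2)), hcube⟩

theorem cube_root_of_b_in_stem_field (a b r : ℚ) (hb : b ≠ 0) (hrb : r ^ 2 ≠ b)
    (hr : r ^ 3 - 3 * b * r + a * b = 0) (θ : ℂ)
    (hθ : θ ^ 12 + (a : ℂ) * θ ^ 6 + (b : ℂ) = 0) :
    (((r / (b - r ^ 2) : ℚ) : ℂ) * θ ^ 10 +
        (((-b ^ 2 + 3 * b * r ^ 2 - r ^ 4) / (b * (b - r ^ 2)) : ℚ) : ℂ) * θ ^ 4) ^ 3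
      = (b : ℂ) ∧
      ∃ y ∈ IntermediateField.adjoin ℚ ({θ} : Set ℂ), y ^ 3 = (b : ℂ) := by
  obtain ⟨hcube, y, hy, hyb⟩ :=
    cube_root_of_b_in_stem_field_general (x := θ ^ 2) hrb hr (by simpa [← pow_mul] using hθ)
  have hθ_sq : θ ^ 2 ∈ IntermediateField.adjoin ℚ {θ} :=
    pow_mem (IntermediateField.mem_adjoin_simple_self ℚ θ) 2
  exact ⟨by simpa [← pow_mul] using hcube, y,
    IntermediateField.adjoin_simple_le_iff.mpr hθ_sq hy, hyb⟩
end

section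
/- Let a, b ∈ ℚ and suppose f(x) = x^12 + a·x^6 + b is irreducible over ℚ, and let θ ∈ ℂ be a root of f. Then there exist s, c ∈ ℂ with s^2 = −3 and c^6 = b such that the subfield of ℂ generated over ℚ by the set of all roots of f in ℂ (i.e., the splitting field of f inside ℂ) equals the subfield of ℂ generated over ℚ by {θ, s, c}. -/
open Polynomial

/-!
Put `φ = c / θ`. Since `θ ^ n * φ ^ n = b`, the numbers `θ ^ n` and `φ ^ n` are the two roots of
`y ^ 2 + a * y + b`, so the roots of `x ^ (2 * n) + a * x ^ n + b` are exactly the products of `θ`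
and `φ` with `n`-th roots of unity. For `n = 6` the roots of unity generate the same field as a
square root of `-3`.
-/

lemma two_mul_add_one_eq_or_eq_neg_of_pow_three_eq_one {R : Type*} [CommRing R] [IsDomain R]
    {s ω : R} (hs : s ^ 2 = -3) (hω : ω ^ 3 = 1) (hω₁ : ω ≠ 1) :
    2 * ω + 1 = s ∨ 2 * ω + 1 = -s := by
  have hcyclotomic : ω ^ 2 + ω + 1 = 0 :=
    (mul_eq_zero_iff_left (sub_ne_zero.2 hω₁)).1 (by linear_combination hω)
  rw [← sq_eq_sq_iff_eq_or_eq_neg]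
  linear_combination 4 * hcyclotomic - hs

section Field

variable {E : Type*} [Field E]

lemma quadratic_eq_zero_iff_eq_or_eq_div {a b t y : E} (ht₀ : t ≠ 0)
    (ht : t ^ 2 + a * t + b = 0) : y ^ 2 + a * y + b = 0 ↔ y = t ∨ y = b / t := by
  have hfactor : t * (y ^ 2 + a * y + b) = (y - t) * (y * t - b) := by
    linear_combination y * ht
  rw [eq_div_iff ht₀, ← sub_eq_zero (a := y), ← sub_eq_zero (b := b), ← mul_eq_zero, ← hfactor,
    mul_eq_zero_iff_left ht₀]

lemma one_add_div_two_pow_six_eq_one {s : E} (h2 : (2 : E) ≠ 0) (hs : s ^ 2 = -3) :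
    ((1 + s) / 2) ^ 6 = 1 := by
  have hcube : ((1 + s) / 2) ^ 3 = -1 := by
    field_simp
    linear_combination (3 + s) * hs
  rw [pow_mul _ 3 2, hcube, neg_one_sq]

end Field

section IntermediateField

variable {F E : Type*} [Field F] [Field E] [Algebra F E] {n : ℕ}

lemma mem_of_pow_eq_pow_of_forall_pow_eq_one_mem {K : IntermediateField F E} (hn : n ≠ 0)
    (hK : ∀ η : E, η ^ n = 1 → η ∈ K) {t x : E} (ht : t ∈ K) (hx : x ^ n = t ^ n) : x ∈ K := by
  obtain rfl | ht₀ := eq_or_ne t 0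
  · rw [zero_pow hn, pow_eq_zero_iff hn] at hx
    exact hx ▸ ht
  · rw [← div_mul_cancel₀ x ht₀]
    refine K.mul_mem (hK _ ?_) ht
    rw [div_pow, hx, div_self (pow_ne_zero n ht₀)]

lemma mem_of_pow_three_eq_one {K : IntermediateField F E} (h2 : (2 : E) ≠ 0) {s ω : E}
    (hs : s ^ 2 = -3) (hsK : s ∈ K) (hω : ω ^ 3 = 1) : ω ∈ K := by
  obtain rfl | hω₁ := eq_or_ne ω 1
  · exact K.one_mem
  have hmem : 2 * ω + 1 ∈ K := by
    obtain h | h := two_mul_add_one_eq_or_eq_neg_of_pow_three_eq_one hs hω hω₁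
    · exact h ▸ hsK
    · exact h ▸ K.neg_mem hsK
  have hω_eq : ω = (2 * ω + 1 - 1) / 2 := by field_simp; ring
  exact hω_eq ▸ K.div_mem (K.sub_mem hmem K.one_mem) (ofNat_mem K 2)

lemma adjoin_pow_six_eq_one (h2 : (2 : E) ≠ 0) {s : E} (hs : s ^ 2 = -3) :
    IntermediateField.adjoin F {η : E | η ^ 6 = 1} = IntermediateField.adjoin F {s} := by
  apply le_antisymm <;> rw [IntermediateField.adjoin_le_iff]
  · intro η (hη : η ^ 6 = 1)
    have hsK := IntermediateField.mem_adjoin_simple_self F s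
    rw [pow_mul η 3 2, sq_eq_one_iff] at hη
    obtain h | h := hη
    · exact mem_of_pow_three_eq_one h2 hs hsK h
    · rw [← neg_neg η]
      have hneg : (-η) ^ 3 = 1 := by rw [Odd.neg_pow (by decide), h, neg_neg]
      exact neg_mem (mem_of_pow_three_eq_one h2 hs hsK hneg)
  · set K := IntermediateField.adjoin F {η : E | η ^ 6 = 1}
    have hmem : (1 + s) / 2 ∈ K :=
      IntermediateField.subset_adjoin F _ (one_add_div_two_pow_six_eq_one h2 hs)
    have hs_eq : s = 2 * ((1 + s) / 2) - 1 := by field_simp; ring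
    rw [Set.singleton_subset_iff, hs_eq]
    exact K.sub_mem (K.mul_mem (ofNat_mem K 2) hmem) K.one_mem

lemma mem_rootSet_X_pow_two_mul_add_iff {a b : F} {x : E} (hn : n ≠ 0) :
    x ∈ (X ^ (2 * n) + C a * X ^ n + C b : F[X]).rootSet E ↔
      (x ^ n) ^ 2 + algebraMap F E a * x ^ n + algebraMap F E b = 0 := by
  have hexpand : X ^ (2 * n) + C a * X ^ n + C b = expand F n (X ^ 2 + C a * X + C b) := by
    simp [pow_mul']
  have hmonic : (X ^ 2 + C a * X + C b).Monic := by monicity!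
  rw [hexpand, mem_rootSet_of_ne ((hmonic.expand (Nat.pos_of_ne_zero hn)).ne_zero), expand_aeval]
  simp

lemma adjoin_rootSet_X_pow_two_mul_add (hn : n ≠ 0) {a b : F} {θ c : E} (hθ₀ : θ ≠ 0)
    (hθ : aeval θ (X ^ (2 * n) + C a * X ^ n + C b : F[X]) = 0) (hc : c ^ n = algebraMap F E b) :
    IntermediateField.adjoin F ((X ^ (2 * n) + C a * X ^ n + C b : F[X]).rootSet E) =
      IntermediateField.adjoin F ({θ, c} ∪ {η | η ^ n = 1}) := by
  have hθ' : (θ ^ n) ^ 2 + algebraMap F E a * θ ^ n + algebraMap F E b = 0 := by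
    simpa [pow_mul'] using hθ
  have hroot (x : E) : x ∈ (X ^ (2 * n) + C a * X ^ n + C b : F[X]).rootSet E ↔
      x ^ n = θ ^ n ∨ x ^ n = (c / θ) ^ n := by
    rw [mem_rootSet_X_pow_two_mul_add_iff hn,
      quadratic_eq_zero_iff_eq_or_eq_div (pow_ne_zero n hθ₀) hθ', div_pow, hc]
  apply le_antisymm <;> rw [IntermediateField.adjoin_le_iff]
  · set L := IntermediateField.adjoin F ({θ, c} ∪ {η : E | η ^ n = 1})
    have hsub : {θ, c} ∪ {η : E | η ^ n = 1} ⊆ L := IntermediateField.subset_adjoin F _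
    have hθL : θ ∈ L := hsub (by simp)
    have hcL : c ∈ L := hsub (by simp)
    have hηL (η : E) (hη : η ^ n = 1) : η ∈ L := hsub (Or.inr hη)
    intro x hx
    obtain h | h := (hroot x).1 hx
    · exact mem_of_pow_eq_pow_of_forall_pow_eq_one_mem hn hηL hθL h
    · exact mem_of_pow_eq_pow_of_forall_pow_eq_one_mem hn hηL (L.div_mem hcL hθL) h
  · set K := IntermediateField.adjoin F ((X ^ (2 * n) + C a * X ^ n + C b : F[X]).rootSet E)
    have hK (x : E) (hx : x ^ n = θ ^ n ∨ x ^ n = (c / θ) ^ n) : x ∈ K :=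
      IntermediateField.subset_adjoin F _ ((hroot x).2 hx)
    have hθK : θ ∈ K := hK θ (Or.inl rfl)
    rintro x ((rfl | rfl) | (hx : x ^ n = 1))
    · exact hθK
    · rw [← div_mul_cancel₀ x hθ₀]
      exact K.mul_mem (hK _ (Or.inr rfl)) hθK
    · rw [← mul_div_cancel_right₀ x hθ₀]
      exact K.div_mem (hK _ (Or.inl (by rw [mul_pow, hx, one_mul]))) hθK

theorem splitting_field_eq_adjoin_theta_sqrt_neg_three_sixth_root_general (h2 : (2 : E) ≠ 0)
    {a b : F} {θ s c : E} (hθ₀ : θ ≠ 0)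
    (hθ : aeval θ (X ^ 12 + C a * X ^ 6 + C b : F[X]) = 0)
    (hs : s ^ 2 = -3) (hc : c ^ 6 = algebraMap F E b) :
    IntermediateField.adjoin F ((X ^ 12 + C a * X ^ 6 + C b : F[X]).rootSet E) =
      IntermediateField.adjoin F {θ, s, c} := by
  rw [adjoin_rootSet_X_pow_two_mul_add (by norm_num : 6 ≠ 0) hθ₀ hθ hc,
    IntermediateField.adjoin_union, adjoin_pow_six_eq_one h2 hs, ← IntermediateField.adjoin_union,
    Set.union_singleton, Set.insert_comm]

end IntermediateField

theorem splitting_field_eq_adjoin_theta_sqrt_neg_three_sixth_root (a b : ℚ) (f : ℚ[X])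
    (hf : f = X ^ 12 + C a * X ^ 6 + C b) (hirr : Irreducible f)
    (θ : ℂ) (hθ : aeval θ f = 0) :
    ∃ s c : ℂ, s ^ 2 = -3 ∧ c ^ 6 = (b : ℂ) ∧
      IntermediateField.adjoin ℚ (f.rootSet ℂ) =
        IntermediateField.adjoin ℚ ({θ, s, c} : Set ℂ) := by
  subst hf
  obtain ⟨s, hs⟩ := IsAlgClosed.exists_pow_nat_eq (-3 : ℂ) two_pos
  obtain ⟨c, hc⟩ := IsAlgClosed.exists_pow_nat_eq (b : ℂ) (n := 6) (by norm_num)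
  have hθ₀ : θ ≠ 0 := by
    rintro rfl
    have hdeg : (X ^ 12 + C a * X ^ 6 + C b).natDegree = 12 := by compute_degree!
    exact hirr.aeval_ne_zero_of_natDegree_ne_one (by simp [hdeg]) (zero_mem _) hθ
  exact ⟨s, c, hs, hc,
    splitting_field_eq_adjoin_theta_sqrt_neg_three_sixth_root_general two_ne_zero hθ₀ hθ hs hc⟩
end

section
/- Let a, b ∈ ℚ and suppose f(x) = x^12 + a·x^6 + b is irreducible over ℚ. Assume: b is a square in ℚ; 3·(4b − a^2) is not a square in ℚ; there exists s ∈ ℚ with s^2 = b such that 3·(a + 2s) is a square in ℚ or 3·(a − 2s) is a square in ℚ; and either b is a cube in ℚ or the cubic x^3 − 3·b·x + a·b has a rational root. Then the Galois group of f over ℚ has order 12. -/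
/-!
Let `θ` be a root of `f` over the base field `F`, so that the roots of `f` are the sixth roots of
`θ ^ 6` and of its conjugate `b / θ ^ 6`. All of them lie in `F(θ)` as soon as `F(θ)` contains a
primitive sixth root of unity and a sixth root of `b`, and then the Galois group has order
`deg f = 12`. The condition on `3 (a ± 2 s)` puts a square root of `-3` into `F(θ ^ 3)`, a root of
the cubic in `F` puts a cube root of `b` into `F(θ ^ 2)`, and `b` is already a square. In the
degenerate cases, where these constructions would divide by zero, `f` is a square or has the
root `0`.
-/

open Polynomial

section GaloisGroupOrder

variable {F : Type*} [Field F] {f : F[X]}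

theorem separable_of_irreducible_of_natDegree_ne_zero (hf : Irreducible f)
    (hdeg : (f.natDegree : F) ≠ 0) : f.Separable := by
  rw [separable_iff_derivative_ne_zero hf]
  intro hder
  obtain ⟨k, hk⟩ : ∃ k, f.natDegree = k + 1 :=
    Nat.exists_eq_succ_of_ne_zero hf.natDegree_pos.ne'
  have hcoeff : f.leadingCoeff * f.natDegree = 0 := by
    simpa [coeff_derivative, leadingCoeff, hk] using congrArg (coeff · k) hder
  exact mul_ne_zero (leadingCoeff_ne_zero.mpr hf.ne_zero) hdeg hcoeff

theorem aeval_adjoinRoot_root (f : F[X]) : aeval (AdjoinRoot.root f) f = 0 := by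
  rw [AdjoinRoot.aeval_eq, AdjoinRoot.mk_self]

theorem card_gal_of_splits_adjoinRoot [Fact (Irreducible f)] (hsep : f.Separable)
    (hsplits : (f.map (algebraMap F (AdjoinRoot f))).Splits) :
    Nat.card f.Gal = f.natDegree := by
  have hf : f ≠ 0 := hsep.ne_zero
  have : IsSplittingField F (AdjoinRoot f) f := by
    refine ⟨hsplits, top_unique ?_⟩
    rw [← AdjoinRoot.adjoinRoot_eq_top]
    refine Algebra.adjoin_mono (Set.singleton_subset_iff.mpr ?_)
    exact (mem_rootSet_of_ne hf).mpr (aeval_adjoinRoot_root f)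
  rw [Gal.card_of_separable hsep,
    ← (IsSplittingField.algEquiv (AdjoinRoot f) f).toLinearEquiv.finrank_eq]
  exact finrank_quotient_span_eq_natDegree

end GaloisGroupOrder

/-- The polynomial `X ^ (2 n) + a X ^ n + b`, i.e. the quadratic `X ^ 2 + a X + b` evaluated at
`X ^ n`. The polynomials under study are the case `n = 6`. -/
noncomputable def powerTrinomial {R : Type*} [CommRing R] (n : ℕ) (a b : R) : R[X] :=
  X ^ (2 * n) + C a * X ^ n + C b

theorem map_powerTrinomial {R S : Type*} [CommRing R] [CommRing S] (φ : R →+* S) (n : ℕ) (a b : R) :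
    (powerTrinomial n a b).map φ = powerTrinomial n (φ a) (φ b) := by
  simp [powerTrinomial]

theorem aeval_powerTrinomial {R A : Type*} [CommRing R] [CommRing A] [Algebra R A] {n : ℕ} {a b : R}
    (x : A) : aeval x (powerTrinomial n a b) =
      x ^ (2 * n) + algebraMap R A a * x ^ n + algebraMap R A b := by
  simp [powerTrinomial]

theorem natDegree_powerTrinomial {R : Type*} [CommRing R] [Nontrivial R] {n : ℕ} {a b : R}
    (hn : n ≠ 0) : (powerTrinomial n a b).natDegree = 2 * n := by
  have hne : 2 * n ≠ n := by omega
  rw [powerTrinomial]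
  compute_degree!
  · simp [hn, hne]
  all_goals omega

section Irreducibility

variable {R : Type*} [CommRing R] [IsDomain R] {n : ℕ} {a b : R}

theorem constant_ne_zero_of_irreducible_powerTrinomial (hn : n ≠ 0)
    (hirr : Irreducible (powerTrinomial n a b)) : b ≠ 0 := by
  rintro rfl
  refine hirr.not_isRoot_of_natDegree_ne_one (x := 0) ?_ ?_
  · rw [natDegree_powerTrinomial hn]
    omega
  · simp [powerTrinomial, hn]

theorem sq_ne_constant_of_irreducible_powerTrinomial {r : R} (hn : n ≠ 0)
    (hirr : Irreducible (powerTrinomial n a b)) (hr : r ^ 3 - 3 * b * r + a * b = 0) :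
    r ^ 2 ≠ b := by
  intro hrb
  have ha : a = 2 * r := by
    refine mul_left_cancel₀ (constant_ne_zero_of_irreducible_powerTrinomial hn hirr) ?_
    linear_combination hr - r * hrb
  refine hirr.not_isSquare ⟨X ^ n + C r, ?_⟩
  rw [powerTrinomial, ha, ← hrb]
  simp only [C_mul, C_pow, C_ofNat]
  ring

theorem two_mul_ne_zero_of_irreducible_powerTrinomial {s t : R} (h3 : (3 : R) ≠ 0)
    (hirr : Irreducible (powerTrinomial (2 * n) a b)) (hs : s ^ 2 = b)
    (ht : t ^ 2 = 3 * (a + 2 * s)) : 2 * t ≠ 0 := by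
  intro h2t
  have ha : a = t ^ 2 - 2 * s := by
    refine mul_left_cancel₀ h3 ?_
    linear_combination -ht - t * h2t
  refine hirr.not_isSquare ⟨X ^ (2 * n) + C t * X ^ n - C s, ?_⟩
  have h2tC : 2 * C t = (0 : R[X]) := by rw [← C_ofNat, ← C_mul, h2t, C_0]
  rw [powerTrinomial, ha, ← hs]
  simp only [C_sub, C_mul, C_pow, C_ofNat]
  linear_combination (-X ^ (3 * n) + C s * X ^ n) * h2tC

end Irreducibility

theorem natCast_six_ne_zero {R : Type*} [Ring R] [NoZeroDivisors R] (h2 : (2 : R) ≠ 0)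
    (h3 : (3 : R) ≠ 0) : ((6 : ℕ) : R) ≠ 0 := by
  rw [show ((6 : ℕ) : R) = 2 * 3 by norm_num]
  exact mul_ne_zero h2 h3

section Radicals

variable {L : Type*} [Field L]

theorem isPrimitiveRoot_six_of_sq_eq_neg_three {e : L} (h2 : (2 : L) ≠ 0) (h3 : (3 : L) ≠ 0)
    (he : e ^ 2 = -3) : IsPrimitiveRoot ((1 + e) / 2) 6 := by
  have : NeZero ((6 : ℕ) : L) := ⟨natCast_six_ne_zero h2 h3⟩
  rw [← isRoot_cyclotomic_iff, cyclotomic_six]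
  simp only [IsRoot.def, eval_add, eval_sub, eval_pow, eval_X, eval_one]
  field_simp
  linear_combination he

theorem exists_sq_eq_neg_three {a s t w : L} (hw : w ≠ 0) (ht0 : t ≠ 0)
    (hroot : w ^ 4 + a * w ^ 2 + s ^ 2 = 0) (ht : t ^ 2 = 3 * (a + 2 * s)) :
    ∃ e : L, e ^ 2 = -3 := by
  have hsq : (t * w) ^ 2 = -3 * (w ^ 2 - s) ^ 2 := by
    linear_combination w ^ 2 * ht + 3 * hroot
  have hne : w ^ 2 - s ≠ 0 := by
    intro h
    refine pow_ne_zero 2 (mul_ne_zero ht0 hw) ?_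
    rw [hsq, h]
    ring
  exact ⟨t * w / (w ^ 2 - s), by rw [div_pow, hsq, mul_div_cancel_right₀ _ (pow_ne_zero 2 hne)]⟩

/- Suppose `v ^ 3 = b`. Then `y = v * w` satisfies `y ^ 3 = b * w ^ 3`, and `y + b / y` is a root
of the cubic; solving `y ^ 2 - r * y + b = 0` together with `y ^ 3 = b * w ^ 3` for `y` gives the
witness `v = y / w`. -/
theorem exists_pow_three_eq {a b r w : L} (hw : w ≠ 0) (hrb : r ^ 2 ≠ b)
    (hroot : w ^ 6 + a * w ^ 3 + b = 0) (hr : r ^ 3 - 3 * b * r + a * b = 0) :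
    ∃ v : L, v ^ 3 = b := by
  have hne : r ^ 2 - b ≠ 0 := sub_ne_zero.mpr hrb
  refine ⟨b * (w ^ 3 + r) / (w * (r ^ 2 - b)), ?_⟩
  have hquad : b * w ^ 6 + (3 * b * r - r ^ 3) * w ^ 3 + b ^ 2 = 0 := by
    linear_combination b * hroot - w ^ 3 * hr
  rw [div_pow, div_eq_iff (pow_ne_zero 3 (mul_ne_zero hw hne))]
  linear_combination b * (b * w ^ 3 + r ^ 3) * hquad

theorem div_pow_six_eq {b s v : L} (hb : b ≠ 0) (hs : s ^ 2 = b) (hv : v ^ 3 = b) :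
    (s / v) ^ 6 = b := by
  calc (s / v) ^ 6 = (s ^ 2) ^ 3 / (v ^ 3) ^ 2 := by rw [div_pow, ← pow_mul, ← pow_mul]
    _ = b := by rw [hs, hv, pow_succ, mul_div_cancel_left₀ _ (pow_ne_zero 2 hb)]

end Radicals

section RootsInExtension

variable {F L : Type*} [Field F] [Field L] [Algebra F L] {n : ℕ} {a b : F} {θ : L}

theorem ne_zero_of_aeval_powerTrinomial_eq_zero (hn : n ≠ 0) (hb : b ≠ 0)
    (hθ : aeval θ (powerTrinomial n a b) = 0) : θ ≠ 0 := by
  rintro rfl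
  refine hb ((algebraMap F L).injective ?_)
  simpa [aeval_powerTrinomial, hn] using hθ

theorem exists_isPrimitiveRoot_six {s t : F} (h2 : (2 : F) ≠ 0) (h3 : (3 : F) ≠ 0) (ht0 : t ≠ 0)
    (hs : s ^ 2 = b) (ht : t ^ 2 = 3 * (a + 2 * s)) (hθ0 : θ ≠ 0)
    (hθ : aeval θ (powerTrinomial (2 * n) a b) = 0) : ∃ ζ : L, IsPrimitiveRoot ζ 6 := by
  have hroot : (θ ^ n) ^ 4 + algebraMap F L a * (θ ^ n) ^ 2 + algebraMap F L s ^ 2 = 0 := by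
    rw [← map_pow, hs, ← hθ, aeval_powerTrinomial]
    ring
  have htL : algebraMap F L t ^ 2 = 3 * (algebraMap F L a + 2 * algebraMap F L s) := by
    simpa [_root_.map_ofNat] using congrArg (algebraMap F L) ht
  obtain ⟨e, he⟩ := exists_sq_eq_neg_three (pow_ne_zero n hθ0)
    ((map_ne_zero (algebraMap F L)).mpr ht0) hroot htL
  have h2L : (2 : L) ≠ 0 := by simpa [_root_.map_ofNat] using (map_ne_zero (algebraMap F L)).mpr h2
  have h3L : (3 : L) ≠ 0 := by simpa [_root_.map_ofNat] using (map_ne_zero (algebraMap F L)).mpr h3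
  exact ⟨_, isPrimitiveRoot_six_of_sq_eq_neg_three h2L h3L he⟩

theorem exists_pow_three_eq_algebraMap (hn : n ≠ 0)
    (hirr : Irreducible (powerTrinomial (3 * n) a b))
    (hcr : (∃ c : F, c ^ 3 = b) ∨ ∃ r : F, r ^ 3 - 3 * b * r + a * b = 0) (hθ0 : θ ≠ 0)
    (hθ : aeval θ (powerTrinomial (3 * n) a b) = 0) : ∃ v : L, v ^ 3 = algebraMap F L b := by
  rcases hcr with ⟨c, hc⟩ | ⟨r, hr⟩
  · exact ⟨algebraMap F L c, by rw [← map_pow, hc]⟩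
  · have hrb : algebraMap F L r ^ 2 ≠ algebraMap F L b := by
      rw [← map_pow, (algebraMap F L).injective.ne_iff]
      exact sq_ne_constant_of_irreducible_powerTrinomial (mul_ne_zero three_ne_zero hn) hirr hr
    have hroot : (θ ^ n) ^ 6 + algebraMap F L a * (θ ^ n) ^ 3 + algebraMap F L b = 0 := by
      rw [← hθ, aeval_powerTrinomial]
      ring
    exact exists_pow_three_eq (pow_ne_zero n hθ0) hrb hroot
      (by simpa [_root_.map_ofNat] using congrArg (algebraMap F L) hr)

end RootsInExtension

theorem splits_powerTrinomial {L : Type*} [Field L] {n : ℕ} {a b ζ β θ : L}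
    (hζ : IsPrimitiveRoot ζ n) (hβ : β ^ n = b) (hθ0 : θ ≠ 0)
    (hθ : θ ^ (2 * n) + a * θ ^ n + b = 0) : (powerTrinomial n a b).Splits := by
  have hvieta_mul : θ ^ n * (β / θ) ^ n = b := by rw [← mul_pow, mul_div_cancel₀ _ hθ0, hβ]
  have hvieta_add : a = -(θ ^ n + (β / θ) ^ n) := by
    refine mul_left_cancel₀ (pow_ne_zero n hθ0) ?_
    linear_combination hθ + hvieta_mul
  have hfactor : powerTrinomial n a b = (X ^ n - C (θ ^ n)) * (X ^ n - C ((β / θ) ^ n)) := by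
    rw [powerTrinomial, hvieta_add, ← hvieta_mul]
    simp only [C_neg, C_add, C_mul]
    ring
  rw [hfactor]
  exact (X_pow_sub_C_splits_of_isPrimitiveRoot hζ rfl).mul
    (X_pow_sub_C_splits_of_isPrimitiveRoot hζ rfl)

theorem card_gal_powerTrinomial {F : Type*} [Field F] {n : ℕ} {a b : F}
    [hirr : Fact (Irreducible (powerTrinomial n a b))] (h2 : (2 : F) ≠ 0) (hn : (n : F) ≠ 0)
    {ζ β : AdjoinRoot (powerTrinomial n a b)} (hζ : IsPrimitiveRoot ζ n)
    (hβ : β ^ n = algebraMap F _ b) : Nat.card (powerTrinomial n a b).Gal = 2 * n := by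
  have hn0 : n ≠ 0 := by
    rintro rfl
    exact hn Nat.cast_zero
  have hdeg : (powerTrinomial n a b).natDegree = 2 * n := natDegree_powerTrinomial hn0
  have hsep : (powerTrinomial n a b).Separable := by
    refine separable_of_irreducible_of_natDegree_ne_zero hirr.out ?_
    rw [hdeg, Nat.cast_mul, Nat.cast_ofNat]
    exact mul_ne_zero h2 hn
  refine (card_gal_of_splits_adjoinRoot hsep ?_).trans hdeg
  have hroot := aeval_adjoinRoot_root (powerTrinomial n a b)
  have hroot0 := ne_zero_of_aeval_powerTrinomial_eq_zero hn0
    (constant_ne_zero_of_irreducible_powerTrinomial hn0 hirr.out) hroot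
  rw [map_powerTrinomial]
  exact splits_powerTrinomial hζ hβ hroot0 ((aeval_powerTrinomial _).symm.trans hroot)

theorem gal_order_twelve_of_12T3_general {F : Type*} [Field F] (h3 : (3 : F) ≠ 0) (a b : F)
    (f : F[X]) (hf : f = X ^ 12 + C a * X ^ 6 + C b) (hirr : Irreducible f)
    (hsq : ∃ s : F, s ^ 2 = b ∧
      ((∃ t : F, t ^ 2 = 3 * (a + 2 * s)) ∨ ∃ t : F, t ^ 2 = 3 * (a - 2 * s)))
    (hcr : (∃ c : F, c ^ 3 = b) ∨ ∃ r : F, r ^ 3 - 3 * b * r + a * b = 0) :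
    Nat.card f.Gal = 12 := by
  obtain ⟨s, t, hs, ht⟩ : ∃ s t : F, s ^ 2 = b ∧ t ^ 2 = 3 * (a + 2 * s) := by
    obtain ⟨s, hs, ⟨t, ht⟩ | ⟨t, ht⟩⟩ := hsq
    · exact ⟨s, t, hs, ht⟩
    · exact ⟨-s, t, by rw [neg_sq, hs], by rw [ht]; ring⟩
  obtain rfl : f = powerTrinomial 6 a b := hf
  have : Fact (Irreducible (powerTrinomial 6 a b)) := ⟨hirr⟩
  have hb : b ≠ 0 := constant_ne_zero_of_irreducible_powerTrinomial (by norm_num) hirr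
  obtain ⟨h2, ht0⟩ := mul_ne_zero_iff.mp
    (two_mul_ne_zero_of_irreducible_powerTrinomial (n := 3) h3 hirr hs ht)
  have hθ := aeval_adjoinRoot_root (powerTrinomial 6 a b)
  have hθ0 := ne_zero_of_aeval_powerTrinomial_eq_zero (by norm_num) hb hθ
  obtain ⟨ζ, hζ⟩ := exists_isPrimitiveRoot_six (n := 3) h2 h3 ht0 hs ht hθ0 hθ
  obtain ⟨v, hv⟩ := exists_pow_three_eq_algebraMap (n := 2) two_ne_zero hirr hcr hθ0 hθ
  have hβ : (algebraMap F _ s / v) ^ 6 = algebraMap F _ b :=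
    div_pow_six_eq ((_root_.map_ne_zero _).mpr hb) (by rw [← map_pow, hs]) hv
  exact card_gal_powerTrinomial h2 (natCast_six_ne_zero h2 h3) hζ hβ

theorem gal_order_twelve_of_12T3 (a b : ℚ) (f : ℚ[X])
    (hf : f = X ^ 12 + C a * X ^ 6 + C b) (hirr : Irreducible f)
    (hb_sq : ∃ s : ℚ, s ^ 2 = b)
    (hd : ¬ ∃ s : ℚ, s ^ 2 = 3 * (4 * b - a ^ 2))
    (hsq : ∃ s : ℚ, s ^ 2 = b ∧ ((∃ t : ℚ, t ^ 2 = 3 * (a + 2 * s)) ∨ ∃ t : ℚ, t ^ 2 = 3 * (a - 2 * s)))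
    (hcr : (∃ c : ℚ, c ^ 3 = b) ∨ ∃ r : ℚ, r ^ 3 - 3 * b * r + a * b = 0) :
    Nat.card f.Gal = 12 :=
  gal_order_twelve_of_12T3_general three_ne_zero a b f hf hirr hsq hcr
end

section
/- Let a, b ∈ ℚ and suppose f(x) = x^12 + a·x^6 + b is irreducible over ℚ. Assume: b is a square in ℚ; 3·(4b − a^2) is not a square in ℚ; there exists s ∈ ℚ with s^2 = b such that 3·(a + 2s) is a square in ℚ or 3·(a − 2s) is a square in ℚ; b is not a cube in ℚ; and the cubic x^3 − 3·b·x + a·b has no rational root. Then the Galois group of f over ℚ has order 36. -/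
open Polynomial

/-!
Over a field `K`, write `b = s ^ 2` with `3 * (a + 2 * s) = t ^ 2`, replacing `s` by `-s` if need
be, and let `α` be a root of `f`. Then `m = α ^ 3` is a root of `x ^ 4 + a x ^ 2 + s ^ 2`,
so `F = K(m)` has degree 4, and it contains `√-3 = 3 (m - s / m) / t`, hence the sixth roots of
unity. The root `s / m` of the quartic is conjugate to `m`, so both are cubes in the splitting field
`L`. Therefore `L` contains a cube root `γ` of `s`, and `L = F(α, γ)`.

By Kummer theory `[L : F] = 9` unless one of `m`, `s`, `s m`, `s m ^ 2` is a cube in `F`. As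
`[F : K] = 4` is prime to 3, neither `f` nor an irreducible cubic over `K` has a root in `F`; but
a cube root of `m` is a root of `f`, a cube root `y` of `s m ^ 2` gives the root `y / m` of `f`, and
a cube root `y` of `s m` gives the root `y ^ 2 + s ^ 2 / y ^ 2` of `x ^ 3 - 3 b x + a b`.
-/

open Module IntermediateField

section Degree

variable {K L : Type*} [Field K] [Field L] [Algebra K L]

theorem finrank_adjoin_simple_of_irreducible {p : K[X]} (hp : Irreducible p) {x : L}
    (hx : aeval x p = 0) : finrank K K⟮x⟯ = p.natDegree := by
  rw [adjoin.finrank (IsAlgebraic.isIntegral ⟨p, hp.ne_zero, hx⟩),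
    ← minpoly.eq_of_irreducible hp hx,
    natDegree_mul_C (inv_ne_zero (leadingCoeff_ne_zero.mpr hp.ne_zero))]

theorem aeval_ne_zero_of_not_natDegree_dvd_finrank {p : K[X]} (hp : Irreducible p)
    (hdvd : ¬ p.natDegree ∣ finrank K L) (x : L) : aeval x p ≠ 0 := fun hx =>
  hdvd <| finrank_adjoin_simple_of_irreducible hp hx ▸
    Dvd.intro _ (finrank_mul_finrank K K⟮x⟯ L)

theorem pow_ne_algebraMap_of_not_dvd_finrank {p : ℕ} (hp : p.Prime)
    (hdvd : ¬ p ∣ finrank K L) {s : K} (hs : ∀ c : K, c ^ p ≠ s) (y : L) :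
    y ^ p ≠ algebraMap K L s := by
  simpa [sub_eq_zero] using aeval_ne_zero_of_not_natDegree_dvd_finrank
    (X_pow_sub_C_irreducible_of_prime hp hs) (by rwa [natDegree_X_pow_sub_C]) y

theorem aeval_ne_zero_of_natDegree_eq_three {p : K[X]} (hp : p.natDegree = 3)
    (hroot : ∀ r : K, ¬ p.IsRoot r) (hdvd : ¬ 3 ∣ finrank K L) (x : L) : aeval x p ≠ 0 :=
  aeval_ne_zero_of_not_natDegree_dvd_finrank
    (irreducible_of_degree_le_three_of_not_isRoot (by simp [hp]) hroot) (hp ▸ hdvd) x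

theorem exists_algEquiv_apply_eq_of_aeval_eq_zero [Normal K L] {p : K[X]} (hp : Irreducible p)
    {x y : L} (hx : aeval x p = 0) (hy : aeval y p = 0) : ∃ g : L ≃ₐ[K] L, g x = y :=
  isConjRoot_iff_exists_algEquiv.mp <|
    (minpoly.eq_of_irreducible hp hy).symm.trans (minpoly.eq_of_irreducible hp hx)

end Degree

section Kummer

variable {F L : Type*} [Field F] [Field L] [Algebra F L]

theorem mem_range_algebraMap_of_zpowers_eq_top [FiniteDimensional F L] [IsGalois F L]
    {σ : L ≃ₐ[F] L} (hσ : Subgroup.zpowers σ = ⊤) {x : L} (hx : σ x = x) :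
    x ∈ Set.range (algebraMap F L) := by
  have hstab : Subgroup.zpowers σ ≤ MulAction.stabilizer (L ≃ₐ[F] L) x :=
    Subgroup.zpowers_le.mpr hx
  exact (IsGalois.mem_range_algebraMap_iff_fixed x).mpr fun g => hstab (hσ ▸ Subgroup.mem_top g)

theorem exists_zpowers_eq_top_of_isSplittingField_X_pow_sub_C {n : ℕ} {ζ : F}
    (hζ : IsPrimitiveRoot ζ n) {m : F} (hirr : Irreducible (X ^ n - C m))
    [IsSplittingField F L (X ^ n - C m)] {α : L} (hα : α ^ n = algebraMap F L m) :
    ∃ σ : L ≃ₐ[F] L, Subgroup.zpowers σ = ⊤ ∧ σ α = algebraMap F L ζ * α := by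
  have : NeZero n := ⟨ne_zero_of_irreducible_X_pow_sub_C hirr⟩
  let e := autEquivZmod hirr L hζ
  refine ⟨e.symm (Multiplicative.ofAdd 1), ?_, ?_⟩
  · refine (Subgroup.eq_top_iff' _).mpr fun g => ⟨(e g).toAdd.cast, e.injective ?_⟩
    beta_reduce
    rw [map_zpow, e.apply_symm_apply, ← ofAdd_zsmul, zsmul_one, ZMod.intCast_zmod_cast,
      ofAdd_toAdd]
  · simpa [Algebra.smul_def] using autEquivZmod_symm_apply_natCast hirr L hα hζ 1

/- If `σ` generates the Galois group, `γ / σ γ` is an `n`-th root of unity `ζ ^ j`, and `σ` then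
fixes `γ * α ^ j`. -/
theorem exists_pow_eq_mul_pow_of_isSplittingField_X_pow_sub_C {n : ℕ} {ζ : F}
    (hζ : IsPrimitiveRoot ζ n) {m s : F} (hirr : Irreducible (X ^ n - C m))
    [IsSplittingField F L (X ^ n - C m)] {α γ : L}
    (hα : α ^ n = algebraMap F L m) (hγ : γ ^ n = algebraMap F L s) :
    ∃ j < n, ∃ y : F, y ^ n = s * m ^ j := by
  have : NeZero n := ⟨ne_zero_of_irreducible_X_pow_sub_C hirr⟩
  have : FiniteDimensional F L := IsSplittingField.finiteDimensional L (X ^ n - C m)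
  have : IsGalois F L := isGalois_of_isSplittingField_X_pow_sub_C
    ⟨ζ, (mem_primitiveRoots (NeZero.pos n)).mpr hζ⟩ hirr L
  obtain rfl | hγ0 := eq_or_ne γ 0
  · exact ⟨0, NeZero.pos n, 0, (algebraMap F L).injective <| by simpa using hγ⟩
  obtain ⟨σ, hσ, hσα⟩ := exists_zpowers_eq_top_of_isSplittingField_X_pow_sub_C hζ hirr hα
  have hroot : (γ / σ γ) ^ n = 1 := by
    rw [div_pow, ← map_pow, hγ, σ.commutes, ← hγ, div_self (pow_ne_zero n hγ0)]
  obtain ⟨j, hj, hζj⟩ :=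
    (hζ.map_of_injective (algebraMap F L).injective).eq_pow_of_pow_eq_one hroot
  have hfix : σ (γ * α ^ j) = γ * α ^ j := by
    have : σ γ ≠ 0 := by simpa using hγ0
    rw [map_mul, map_pow, hσα, mul_pow, hζj, ← mul_assoc, mul_div_cancel₀ γ this]
  obtain ⟨y, hy⟩ := mem_range_algebraMap_of_zpowers_eq_top hσ hfix
  refine ⟨j, hj, y, (algebraMap F L).injective ?_⟩
  rw [map_pow, hy, mul_pow, hγ, pow_right_comm, hα, map_mul, map_pow]

theorem isSplittingField_adjoin_simple_X_pow_sub_C {n : ℕ} {ζ m : F} (hζ : IsPrimitiveRoot ζ n)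
    (hirr : Irreducible (X ^ n - C m)) {α : L} (hα : α ^ n = algebraMap F L m) :
    IsSplittingField F F⟮α⟯ (X ^ n - C m) := by
  have hn : 0 < n := Nat.pos_of_ne_zero (ne_zero_of_irreducible_X_pow_sub_C hirr)
  have hrank : finrank F F⟮α⟯ = n := by
    rw [finrank_adjoin_simple_of_irreducible hirr (by simp [hα]), natDegree_X_pow_sub_C]
  have : FiniteDimensional F F⟮α⟯ := FiniteDimensional.of_finrank_pos (hrank ▸ hn)
  have hgen : F⟮AdjoinSimple.gen F α⟯ = ⊤ :=
    lift_injective _ <| by rw [lift_adjoin_simple, lift_top, AdjoinSimple.coe_gen]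
  have hsplit := isSplittingField_X_pow_sub_C_of_root_adjoin_eq_top
    (hrank ▸ ⟨ζ, (mem_primitiveRoots hn).mpr hζ⟩) (a := m) (Subtype.ext <| by simp [hrank, hα]) hgen
  rwa [hrank] at hsplit

theorem finrank_adjoin_pair_eq_sq {p : ℕ} (hp : p.Prime) {ζ : F} (hζ : IsPrimitiveRoot ζ p)
    {m s : F} (hm : ∀ y : F, y ^ p ≠ m) (hs : ∀ j < p, ∀ y : F, y ^ p ≠ s * m ^ j) {α γ : L}
    (hα : α ^ p = algebraMap F L m) (hγ : γ ^ p = algebraMap F L s) :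
    finrank F F⟮α, γ⟯ = p ^ 2 := by
  have hirr : Irreducible (X ^ p - C m) := X_pow_sub_C_irreducible_of_prime hp hm
  have hirr' : Irreducible (X ^ p - C (algebraMap F F⟮α⟯ s)) := by
    refine X_pow_sub_C_irreducible_of_prime hp fun y hy => ?_
    have := isSplittingField_adjoin_simple_X_pow_sub_C hζ hirr hα
    obtain ⟨j, hj, z, hz⟩ := exists_pow_eq_mul_pow_of_isSplittingField_X_pow_sub_C hζ hirr
      (α := AdjoinSimple.gen F α) (Subtype.ext <| by simp [hα]) hy
    exact hs j hj z hz
  have hEα : finrank F F⟮α⟯ = p := by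
    rw [finrank_adjoin_simple_of_irreducible hirr (by simp [hα]), natDegree_X_pow_sub_C]
  have hEγ : finrank F⟮α⟯ F⟮α⟯⟮γ⟯ = p := by
    rw [finrank_adjoin_simple_of_irreducible hirr'
      (by simp [hγ, ← IsScalarTower.algebraMap_apply]), natDegree_X_pow_sub_C]
  calc finrank F F⟮α, γ⟯
    _ = finrank F F⟮α⟯⟮γ⟯ := by rw [← adjoin_simple_adjoin_simple]; rfl
    _ = finrank F F⟮α⟯ * finrank F⟮α⟯ F⟮α⟯⟮γ⟯ := (finrank_mul_finrank F F⟮α⟯ F⟮α⟯⟮γ⟯).symm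
    _ = p ^ 2 := by rw [hEα, hEγ, sq]

end Kummer

section RootsOfUnity

variable {F : Type*} [Field F]

theorem isPrimitiveRoot_six_of_sq_eq_neg_three_s9 [NeZero (6 : F)] {δ : F} (hδ : δ ^ 2 = -3) :
    IsPrimitiveRoot ((1 + δ) / 2) 6 := by
  have : NeZero ((6 : ℕ) : F) := by exact_mod_cast ‹NeZero (6 : F)›
  have h2 : (2 : F) ≠ 0 := left_ne_zero_of_mul (b := 3) (by norm_num [NeZero.ne (6 : F)])
  rw [← isRoot_cyclotomic_iff, cyclotomic_six, IsRoot.def]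
  simp only [eval_add, eval_sub, eval_pow, eval_X, eval_one]
  field_simp
  linear_combination hδ

theorem mem_of_pow_eq_pow_of_isPrimitiveRoot {L : Type*} [Field L] [Algebra F L] {n : ℕ} [NeZero n]
    {ζ : F} (hζ : IsPrimitiveRoot ζ n) {E : IntermediateField F L} {x y : L} (hx : x ∈ E)
    (hxy : y ^ n = x ^ n) : y ∈ E := by
  obtain rfl | hx0 := eq_or_ne x 0
  · rw [zero_pow (NeZero.ne n)] at hxy
    exact pow_eq_zero_iff (NeZero.ne n) |>.mp hxy ▸ hx
  have hroot : (y / x) ^ n = 1 := by rw [div_pow, hxy, div_self (pow_ne_zero n hx0)]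
  obtain ⟨j, -, hj⟩ :=
    (hζ.map_of_injective (algebraMap F L).injective).eq_pow_of_pow_eq_one hroot
  rw [← div_mul_cancel₀ y hx0, ← hj]
  exact mul_mem (pow_mem (E.algebraMap_mem ζ) j) hx

end RootsOfUnity

section QuarticIdentities

variable {F : Type*} [Field F] {a s m : F}

theorem ne_zero_of_quartic_eq_zero (hs : s ≠ 0) (hm : m ^ 4 + a * m ^ 2 + s ^ 2 = 0) : m ≠ 0 := by
  rintro rfl
  simp_all

theorem quartic_div_eq_zero (hs : s ≠ 0) (hm : m ^ 4 + a * m ^ 2 + s ^ 2 = 0) :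
    (s / m) ^ 4 + a * (s / m) ^ 2 + s ^ 2 = 0 := by
  have hm0 := ne_zero_of_quartic_eq_zero hs hm
  field_simp
  linear_combination s ^ 2 * hm

theorem sq_sub_div_eq_neg_three {t : F} (hs : s ≠ 0) (hm : m ^ 4 + a * m ^ 2 + s ^ 2 = 0)
    (ht : t ^ 2 = 3 * (a + 2 * s)) (ht0 : t ≠ 0) : (3 * (m - s / m) / t) ^ 2 = -3 := by
  have hm0 := ne_zero_of_quartic_eq_zero hs hm
  field_simp
  rw [ht]
  linear_combination 9 * hm

theorem cubic_eq_zero_of_pow_three_eq (hs : s ≠ 0) (hm : m ^ 4 + a * m ^ 2 + s ^ 2 = 0) {y : F}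
    (hy : y ^ 3 = s * m) :
    (y ^ 2 + s ^ 2 / y ^ 2) ^ 3 - 3 * s ^ 2 * (y ^ 2 + s ^ 2 / y ^ 2) + a * s ^ 2 = 0 := by
  have hm0 := ne_zero_of_quartic_eq_zero hs hm
  have hy0 : y ≠ 0 := by
    rintro rfl
    simp_all
  calc (y ^ 2 + s ^ 2 / y ^ 2) ^ 3 - 3 * s ^ 2 * (y ^ 2 + s ^ 2 / y ^ 2) + a * s ^ 2
    _ = (y ^ 3) ^ 2 + s ^ 6 / (y ^ 3) ^ 2 + a * s ^ 2 := by field_simp; ring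
    _ = s ^ 2 * (m ^ 4 + a * m ^ 2 + s ^ 2) / m ^ 2 := by rw [hy]; field_simp; ring
    _ = 0 := by rw [hm, mul_zero, zero_div]

theorem pow_six_eq_or_of_quartic_eq_zero {α γ y : F} (hs : s ≠ 0)
    (hα : (α ^ 3) ^ 4 + a * (α ^ 3) ^ 2 + s ^ 2 = 0) (hγ : γ ^ 3 = s)
    (hy : (y ^ 3) ^ 4 + a * (y ^ 3) ^ 2 + s ^ 2 = 0) : y ^ 6 = α ^ 6 ∨ y ^ 6 = (γ / α) ^ 6 := by
  have hα0 : α ≠ 0 := ne_zero_pow three_ne_zero (ne_zero_of_quartic_eq_zero hs hα)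
  have hfactor : (y ^ 6 - α ^ 6) * (y ^ 6 - (γ / α) ^ 6) = 0 := by
    subst hγ
    field_simp
    linear_combination α ^ 6 * hy - y ^ 6 * hα
  simpa [sub_eq_zero] using hfactor

end QuarticIdentities

section Quartic

variable {K F L : Type*} [Field K] [Field F] [Field L] [Algebra K F] [Algebra K L] {a s : K}

/-- The quartic `x ^ 4 + a x ^ 2 + s ^ 2`. Its roots are the cubes of the roots of
`x ^ 12 + a x ^ 6 + s ^ 2`, which is handled below as its expansion by 3. -/
noncomputable def quarticResolvent (a s : K) : K[X] := X ^ 4 + C a * X ^ 2 + C (s ^ 2)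

theorem natDegree_quarticResolvent : (quarticResolvent a s).natDegree = 4 := by
  unfold quarticResolvent
  compute_degree!

theorem aeval_quarticResolvent (x : F) : aeval x (quarticResolvent a s) =
    x ^ 4 + algebraMap K F a * x ^ 2 + algebraMap K F s ^ 2 := by
  simp [quarticResolvent]

theorem expand_three_quarticResolvent :
    expand K 3 (quarticResolvent a s) = X ^ 12 + C a * X ^ 6 + C (s ^ 2) := by
  simp [quarticResolvent, ← pow_mul]

theorem add_two_mul_ne_zero_of_irreducible_quarticResolvent
    (hirr : Irreducible (quarticResolvent a s)) : a + 2 * s ≠ 0 := by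
  refine fun h => hirr.not_isSquare ⟨X ^ 2 - C s, ?_⟩
  rw [quarticResolvent, eq_neg_of_add_eq_zero_left h]
  simp only [C_neg, C_mul, C_ofNat, C_pow]
  ring

theorem pow_three_ne_of_irreducible_expand (hirr : Irreducible (expand K 3 (quarticResolvent a s)))
    (hdvd : ¬ 3 ∣ finrank K F) {m : F} (hm : aeval m (quarticResolvent a s) = 0) (y : F) :
    y ^ 3 ≠ m := by
  rintro rfl
  refine aeval_ne_zero_of_not_natDegree_dvd_finrank hirr (L := F) ?_ y (by rwa [expand_aeval])
  rw [natDegree_expand]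
  exact fun h => hdvd (dvd_of_mul_left_dvd h)

theorem pow_three_ne_mul_pow (hirr : Irreducible (expand K 3 (quarticResolvent a s)))
    (hs : ∀ c : K, c ^ 3 ≠ s) (hcubic : ∀ r : K, r ^ 3 - 3 * s ^ 2 * r + a * s ^ 2 ≠ 0)
    (hdvd : ¬ 3 ∣ finrank K F) {m : F} (hm : aeval m (quarticResolvent a s) = 0) :
    ∀ j < 3, ∀ y : F, y ^ 3 ≠ algebraMap K F s * m ^ j := by
  have hs0 : algebraMap K F s ≠ 0 :=
    (algebraMap K F).injective.ne_iff' (map_zero _) |>.mpr (by simpa [eq_comm] using hs 0)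
  have hm' := hm
  rw [aeval_quarticResolvent] at hm'
  have hm0 : m ≠ 0 := ne_zero_of_quartic_eq_zero hs0 hm'
  intro j hj y hy
  interval_cases j
  · exact pow_ne_algebraMap_of_not_dvd_finrank Nat.prime_three hdvd hs y (by simpa using hy)
  · have hdeg : (X ^ 3 - C (3 * s ^ 2) * X + C (a * s ^ 2)).natDegree = 3 := by compute_degree!
    refine aeval_ne_zero_of_natDegree_eq_three hdeg (fun r => by simpa using hcubic r) hdvd
      (y ^ 2 + algebraMap K F s ^ 2 / y ^ 2) ?_
    simpa [map_ofNat (algebraMap K F) 3] using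
      cubic_eq_zero_of_pow_three_eq hs0 hm' (by simpa using hy)
  · refine pow_three_ne_of_irreducible_expand hirr hdvd
      (m := algebraMap K F s / m) ?_ (y / m) ?_
    · rw [aeval_quarticResolvent, quartic_div_eq_zero hs0 hm']
    · rw [div_pow, hy]
      field_simp

theorem exists_pow_three_eq_algebraMap_s9 [Normal K L] (hirr : Irreducible (quarticResolvent a s))
    (hs : s ≠ 0) {α : L} (hα : aeval (α ^ 3) (quarticResolvent a s) = 0) :
    ∃ γ : L, γ ^ 3 = algebraMap K L s := by
  have hs0 : algebraMap K L s ≠ 0 := by simpa using hs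
  have hα' := hα
  rw [aeval_quarticResolvent] at hα'
  obtain ⟨g, hg⟩ := exists_algEquiv_apply_eq_of_aeval_eq_zero hirr hα
    (y := algebraMap K L s / α ^ 3) (by rw [aeval_quarticResolvent, quartic_div_eq_zero hs0 hα'])
  refine ⟨α * g α, ?_⟩
  rw [mul_pow, ← map_pow, hg, mul_div_cancel₀ _ (ne_zero_of_quartic_eq_zero hs0 hα')]

theorem adjoin_pair_eq_top [Algebra F L] [IsScalarTower K F L]
    [IsSplittingField K L (expand K 3 (quarticResolvent a s))] (hs : s ≠ 0) {ζ : F}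
    (hζ : IsPrimitiveRoot ζ 6) {α γ : L} (hα : aeval (α ^ 3) (quarticResolvent a s) = 0)
    (hγ : γ ^ 3 = algebraMap K L s) : F⟮α, γ⟯ = ⊤ := by
  set E := F⟮α, γ⟯
  have hαE : α ∈ E := subset_adjoin F _ (by simp)
  have hγE : γ ∈ E := subset_adjoin F _ (by simp)
  have hroots : Algebra.adjoin K ((expand K 3 (quarticResolvent a s)).rootSet L) ≤
      (E.restrictScalars K).toSubalgebra := by
    refine Algebra.adjoin_le fun y hy => ?_
    have hy' := aeval_eq_zero_of_mem_rootSet hy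
    rw [expand_aeval, aeval_quarticResolvent] at hy'
    rw [aeval_quarticResolvent] at hα
    obtain h | h := pow_six_eq_or_of_quartic_eq_zero (by simpa using hs) hα hγ hy'
    · exact mem_of_pow_eq_pow_of_isPrimitiveRoot hζ hαE h
    · exact mem_of_pow_eq_pow_of_isPrimitiveRoot hζ (div_mem hγE hαE) h
  rw [IsSplittingField.adjoin_rootSet] at hroots
  exact eq_top_iff.mpr fun y _ => hroots (Algebra.mem_top : y ∈ _)

theorem separable_of_irreducible_expand_quarticResolvent [NeZero (6 : K)]
    (hirr : Irreducible (expand K 3 (quarticResolvent a s))) :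
    (expand K 3 (quarticResolvent a s)).Separable := by
  have h2 : (2 : K) ≠ 0 := left_ne_zero_of_mul (b := 3) (by norm_num [NeZero.ne (6 : K)])
  have h12 : (12 : K) ≠ 0 := by
    rw [show (12 : K) = 2 * 6 by norm_num]
    exact mul_ne_zero h2 (NeZero.ne 6)
  have hcoeff : (derivative (expand K 3 (quarticResolvent a s))).coeff 11 = 12 := by
    rw [expand_three_quarticResolvent, coeff_derivative]
    norm_num [coeff_X_pow, coeff_C, -map_pow]
  refine (separable_iff_derivative_ne_zero hirr).mpr fun h => h12 ?_
  rw [← hcoeff, h, coeff_zero]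

theorem exists_isPrimitiveRoot_six_s9 [NeZero (6 : K)]
    (hirr : Irreducible (quarticResolvent a s)) (hs : s ≠ 0) {t : K}
    (ht : t ^ 2 = 3 * (a + 2 * s)) {m : F} (hm : aeval m (quarticResolvent a s) = 0) :
    ∃ ζ : F, IsPrimitiveRoot ζ 6 := by
  have h6 : (6 : K) ≠ 0 := NeZero.ne 6
  have : NeZero (6 : F) := ⟨by
    simpa only [map_ofNat, map_zero] using (algebraMap K F).injective.ne h6⟩
  have h3 : (3 : K) ≠ 0 := left_ne_zero_of_mul (b := 2) (by norm_num [h6])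
  have ht0 : t ≠ 0 := ne_zero_pow two_ne_zero <|
    ht ▸ mul_ne_zero h3 (add_two_mul_ne_zero_of_irreducible_quarticResolvent hirr)
  have htF : algebraMap K F t ^ 2 = 3 * (algebraMap K F a + 2 * algebraMap K F s) := by
    simpa only [map_pow, map_mul, map_add, map_ofNat] using congrArg (algebraMap K F) ht
  rw [aeval_quarticResolvent] at hm
  exact ⟨_, isPrimitiveRoot_six_of_sq_eq_neg_three_s9 <|
    sq_sub_div_eq_neg_three (by simpa using hs) hm htF (by simpa using ht0)⟩

theorem finrank_eq_thirtysix_of_isSplittingField [NeZero (6 : K)]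
    [IsSplittingField K L (expand K 3 (quarticResolvent a s))]
    (hirr : Irreducible (expand K 3 (quarticResolvent a s))) {t : K}
    (ht : t ^ 2 = 3 * (a + 2 * s)) (hs : ∀ c : K, c ^ 3 ≠ s)
    (hcubic : ∀ r : K, r ^ 3 - 3 * s ^ 2 * r + a * s ^ 2 ≠ 0) : finrank K L = 36 := by
  have hs0 : s ≠ 0 := by simpa [eq_comm] using hs 0
  have hirr₄ : Irreducible (quarticResolvent a s) := of_irreducible_expand three_ne_zero hirr
  have : Normal K L := Normal.of_isSplittingField (expand K 3 (quarticResolvent a s))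
  obtain ⟨α, hα⟩ : ∃ α : L, aeval (α ^ 3) (quarticResolvent a s) = 0 := by
    simpa [eval_map_algebraMap] using
      (IsSplittingField.splits L (expand K 3 (quarticResolvent a s))).exists_eval_eq_zero
        (by simpa using hirr.degree_pos.ne')
  obtain ⟨γ, hγ⟩ := exists_pow_three_eq_algebraMap_s9 hirr₄ hs0 hα
  let F := K⟮α ^ 3⟯
  let m : F := AdjoinSimple.gen K (α ^ 3)
  have hm : aeval m (quarticResolvent a s) = 0 := 
    (aeval_algebraMap_eq_zero_iff L m (quarticResolvent a s)).mp hα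
  have hF : finrank K F = 4 := by
    rw [finrank_adjoin_simple_of_irreducible hirr₄ hα, natDegree_quarticResolvent]
  have hdvd : ¬ 3 ∣ finrank K F := by norm_num [hF]
  obtain ⟨ζ, hζ⟩ := exists_isPrimitiveRoot_six_s9 hirr₄ hs0 ht hm
  have hL : finrank F F⟮α, γ⟯ = 3 ^ 2 :=
    finrank_adjoin_pair_eq_sq Nat.prime_three (hζ.pow (by norm_num) (by norm_num : 6 = 2 * 3))
      (pow_three_ne_of_irreducible_expand hirr hdvd hm)
      (pow_three_ne_mul_pow hirr hs hcubic hdvd hm) rfl hγ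
  rw [adjoin_pair_eq_top hs0 hζ hα hγ, finrank_top'] at hL
  rw [← finrank_mul_finrank K F L, hF, hL]
  norm_num

end Quartic

theorem gal_order_thirtysix_of_12T16_general {K : Type*} [Field K] [NeZero (6 : K)] (a b : K)
    (f : K[X]) (hf : f = X ^ 12 + C a * X ^ 6 + C b) (hirr : Irreducible f)
    (hsq : ∃ s : K, s ^ 2 = b ∧
      ((∃ t : K, t ^ 2 = 3 * (a + 2 * s)) ∨ ∃ t : K, t ^ 2 = 3 * (a - 2 * s)))
    (hnc : ¬ ∃ c : K, c ^ 3 = b)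
    (hnr : ¬ ∃ r : K, r ^ 3 - 3 * b * r + a * b = 0) :
    Nat.card f.Gal = 36 := by
  obtain ⟨s, rfl, t, ht⟩ : ∃ s : K, s ^ 2 = b ∧ ∃ t : K, t ^ 2 = 3 * (a + 2 * s) := by
    obtain ⟨s, hs, ht | ⟨t, ht⟩⟩ := hsq
    · exact ⟨s, hs, ht⟩
    · exact ⟨-s, by rw [neg_sq, hs], t, by rw [ht]; ring⟩
  have hs : ∀ c : K, c ^ 3 ≠ s := fun c hc => hnc ⟨c ^ 2, by rw [← hc, pow_right_comm]⟩
  rw [← expand_three_quarticResolvent] at hf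
  subst hf
  rw [Gal.card_of_separable (separable_of_irreducible_expand_quarticResolvent hirr)]
  exact finrank_eq_thirtysix_of_isSplittingField hirr ht hs (not_exists.mp hnr)

theorem gal_order_thirtysix_of_12T16 (a b : ℚ) (f : ℚ[X])
    (hf : f = X ^ 12 + C a * X ^ 6 + C b) (hirr : Irreducible f)
    (hb_sq : ∃ s : ℚ, s ^ 2 = b)
    (hd : ¬ ∃ s : ℚ, s ^ 2 = 3 * (4 * b - a ^ 2))
    (hsq : ∃ s : ℚ, s ^ 2 = b ∧ ((∃ t : ℚ, t ^ 2 = 3 * (a + 2 * s)) ∨ ∃ t : ℚ, t ^ 2 = 3 * (a - 2 * s)))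
    (hnc : ¬ ∃ c : ℚ, c ^ 3 = b)
    (hnr : ¬ ∃ r : ℚ, r ^ 3 - 3 * b * r + a * b = 0) :
    Nat.card f.Gal = 36 := by
  have : NeZero (6 : ℚ) := ⟨by norm_num⟩
  exact gal_order_thirtysix_of_12T16_general a b f hf hirr hsq hnc hnr
end
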